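/- Let f : ℝ → ℝ be smooth, positive, with f(x) → 0 as |x| → ∞ and with bounded first and second derivatives, and let ε > 0. Let u : [0,T) × ℝ → ℝ be a classical solution of ∂u/∂t = ∂²u/∂x² − 2 f(x) u − u² with constant initial datum u(0,x) = −ε, with u ≤ 0 and u(t,·) bounded for each t ∈ [0,T). Let w solve the linear equation ∂w/∂t = ∂²w/∂x² − 2 f(x) w with nonnegative, nonzero integrable initial datum and the regularity and decay guaranteed by parabolic theory. Then for every t ∈ (0,T): ε · ∫₀ᵗ ‖w(t,·)‖_{L¹(ℝ)} / ‖w(s,·)‖_{L¹(ℝ)} ds ≤ 1. Consequently, if there exists T' > 0 with ε ∫₀^{T'} ‖w(T',·)‖_{L¹}/‖w(s,·)‖_{L¹} ds > 1, then no such classical solution can exist on [0,T) for any T > T'. -/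

import Mathlib

open MeasureTheory Filter
open scoped ENNReal NNReal

/-!
The function `v = -u ≥ 0` satisfies `∂ₜv = ∂ₓ²v - 2fv + v²`. By concavity its truncation
`z = v / (1 + δv) ≤ 1/δ` satisfies `∂ₜz ≥ ∂ₓ²z - 2fz + z²`. Pairing `z` with the time-reversed
solution of the linear equation, `J(s) = ∫ z(s) w(t - s)`, the linear terms cancel and
Cauchy-Schwarz leaves the Riccati inequality `J' ≥ J² / P` with `P(s) = ∫ w(t - s)`; it integrates
to `∫₀ᵗ 1/P ≤ 1/J(0)`, which is the claim as `δ → 0`.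

Nothing is assumed on `u` jointly in `(t, x)`, nor on the decay of `∂ₓu`, so integrating by parts
against `z` is not available. Instead `z` is compared with the heat flow of its own past values:
a bounded separately regular supersolution is lower semicontinuous (by a Baire category argument),
which is enough for a comparison principle, and the comparison bounds the lower right Dini
derivative of `J` from below.
-/

section

open Set Topology ProbabilityTheory

/-- `f` is differentiable on `ℝ` and its derivative has derivative `c` at `x`. -/
def HasSecondDerivAt (f : ℝ → ℝ) (c x : ℝ) : Prop :=
  ∃ f' : ℝ → ℝ, (∀ y, HasDerivAt f (f' y) y) ∧ HasDerivAt f' c x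

/-- `q` is the value of `∂ₜz - ∂ₓ²z` at `(s, x)`. Only the restrictions of `z` to the two lines
through `(s, x)` are involved, so joint continuity of `z` is not implied. -/
def HasHeatOpAt (z : ℝ → ℝ → ℝ) (q s x : ℝ) : Prop :=
  ∃ D c, HasDerivAt (fun τ => z τ x) D s ∧ HasSecondDerivAt (z s) c x ∧ D - c = q

theorem hasSecondDerivAt_of_contDiff {f : ℝ → ℝ} (hf : ContDiff ℝ 2 f) (x : ℝ) :
    HasSecondDerivAt f (deriv (deriv f) x) x :=
  ⟨deriv f, fun y => (hf.differentiable (by norm_num) y).hasDerivAt,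
    (hf.differentiable_deriv_two x).hasDerivAt⟩

theorem hasSecondDerivAt_quadratic (k₀ k₁ k₂ x : ℝ) :
    HasSecondDerivAt (fun y => k₀ + k₁ * y + k₂ * y ^ 2) (2 * k₂) x := by
  refine ⟨fun y => k₁ + 2 * k₂ * y, fun y => ?_, ?_⟩
  · have := (((hasDerivAt_id y).const_mul k₁).const_add k₀).add
      (((hasDerivAt_id y).pow 2).const_mul k₂)
    exact this.congr_deriv (by simp; ring)
  · simpa using ((hasDerivAt_id x).const_mul (2 * k₂)).const_add k₁

namespace HasSecondDerivAt

variable {f g : ℝ → ℝ} {c d x : ℝ}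

theorem add (hf : HasSecondDerivAt f c x) (hg : HasSecondDerivAt g d x) :
    HasSecondDerivAt (fun y => f y + g y) (c + d) x := by
  obtain ⟨f', hf', hfc⟩ := hf
  obtain ⟨g', hg', hgd⟩ := hg
  exact ⟨fun y => f' y + g' y, fun y => (hf' y).add (hg' y), hfc.add hgd⟩

theorem neg (hf : HasSecondDerivAt f c x) : HasSecondDerivAt (fun y => -f y) (-c) x := by
  obtain ⟨f', hf', hfc⟩ := hf
  exact ⟨fun y => -f' y, fun y => (hf' y).neg, hfc.neg⟩

theorem continuous (hf : HasSecondDerivAt f c x) : Continuous f :=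
  let ⟨_, hf', _⟩ := hf
  continuous_iff_continuousAt.2 fun y => (hf' y).continuousAt

theorem tendsto_taylor (hf : HasSecondDerivAt f c x) {f' : ℝ} (hf' : HasDerivAt f f' x) :
    Tendsto (fun k => (f (x + k) - f x - k * f') / k ^ 2) (𝓝[≠] 0) (𝓝 (c / 2)) := by
  obtain ⟨g, hg, hgc⟩ := hf
  obtain rfl : g x = f' := (hg x).unique hf'
  have hdiff (k : ℝ) :
      HasDerivAt (fun k => f (x + k) - f x - k * g x) (g (x + k) - g x) k :=
    ((((hg (x + k)).comp_const_add x k).sub_const (f x)).sub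
      ((hasDerivAt_id k).mul_const (g x))).congr_deriv (by ring)
  refine HasDerivAt.lhopital_zero_nhdsNE (f' := fun k => g (x + k) - g x)
    (g' := fun k => 2 * k) (.of_forall hdiff) (.of_forall fun k => ?_) ?_ ?_ ?_ ?_
  · simpa using hasDerivAt_pow 2 k
  · filter_upwards [self_mem_nhdsWithin] with k hk
    simpa using hk
  · simpa using (hdiff 0).continuousAt.tendsto.mono_left nhdsWithin_le_nhds
  · have : Continuous fun k : ℝ => k ^ 2 := by fun_prop
    simpa using (this.tendsto 0).mono_left nhdsWithin_le_nhds
  · refine ((hasDerivAt_iff_tendsto_slope_zero.1 hgc).div_const 2).congr' ?_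
    filter_upwards [self_mem_nhdsWithin] with k (hk : k ≠ 0)
    simp only [smul_eq_mul]
    field_simp

theorem nonneg_of_isLocalMin (hf : HasSecondDerivAt f c x) (hmin : IsLocalMin f x) : 0 ≤ c := by
  obtain ⟨g, hg, -⟩ := id hf
  have hgx : g x = 0 := hmin.hasDerivAt_eq_zero (hg x)
  have hlim : Tendsto (fun k => x + k) (𝓝[≠] 0) (𝓝 x) := by
    have : Continuous fun k : ℝ => x + k := by fun_prop
    simpa using (this.tendsto 0).mono_left nhdsWithin_le_nhds
  have : 0 ≤ c / 2 := by
    refine ge_of_tendsto (hf.tendsto_taylor (hg x)) ?_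
    filter_upwards [hlim.eventually hmin] with k hk
    rw [hgx, mul_zero, sub_zero]
    exact div_nonneg (sub_nonneg.2 hk) (sq_nonneg k)
  linarith

end HasSecondDerivAt

theorem hasHeatOpAt_quadratic (k₀ k₁ k₂ m s x : ℝ) :
    HasHeatOpAt (fun τ x => k₀ + k₁ * x + k₂ * x ^ 2 + m * τ) (m - 2 * k₂) s x := by
  refine ⟨m, 2 * k₂, ?_, ?_, rfl⟩
  · simpa using ((hasDerivAt_id s).const_mul m).const_add (k₀ + k₁ * x + k₂ * x ^ 2)
  · convert hasSecondDerivAt_quadratic (k₀ + m * s) k₁ k₂ x using 2 with y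
    ring

namespace HasHeatOpAt

variable {y z : ℝ → ℝ → ℝ} {p q s x : ℝ}

theorem add (hy : HasHeatOpAt y p s x) (hz : HasHeatOpAt z q s x) :
    HasHeatOpAt (fun τ x => y τ x + z τ x) (p + q) s x := by
  obtain ⟨D, c, hD, hc, rfl⟩ := hy
  obtain ⟨E, d, hE, hd, rfl⟩ := hz
  exact ⟨D + E, c + d, hD.add hE, hc.add hd, by ring⟩

theorem neg (hz : HasHeatOpAt z q s x) : HasHeatOpAt (fun τ x => -z τ x) (-q) s x := by
  obtain ⟨D, c, hD, hc, rfl⟩ := hz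
  exact ⟨-D, -c, hD.neg, hc.neg, by ring⟩

theorem comp_sub_const {σ : ℝ} (hz : HasHeatOpAt z q (s - σ) x) :
    HasHeatOpAt (fun τ => z (τ - σ)) q s x := by
  obtain ⟨D, c, hD, hc, rfl⟩ := hz
  exact ⟨D, c, HasDerivAt.comp_sub_const s σ hD, hc, rfl⟩

end HasHeatOpAt

theorem hasDerivAt_nonpos_of_eventually_le_nhdsLT {g : ℝ → ℝ} {D s : ℝ} (hg : HasDerivAt g D s)
    (hmin : ∀ᶠ r in 𝓝[<] s, g s ≤ g r) : D ≤ 0 := by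
  have hslope := (hasDerivAt_iff_tendsto_slope.1 hg).mono_left
    (nhdsWithin_mono s fun r (hr : r < s) => ne_of_lt hr : 𝓝[<] s ≤ 𝓝[≠] s)
  refine le_of_tendsto hslope ?_
  filter_upwards [hmin, self_mem_nhdsWithin] with r hr (hrs : r < s)
  rw [slope_def_field]
  exact div_nonpos_of_nonneg_of_nonpos (sub_nonneg.2 hr) (sub_nonpos.2 hrs.le)

section MinimumPrinciple

variable {a b t₀ t₁ : ℝ} {Z : ℝ → ℝ → ℝ}

theorem heatOp_nonpos_of_isMinOn {q s x : ℝ} (hq : HasHeatOpAt Z q s x)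
    (hmin : IsMinOn (fun p : ℝ × ℝ => Z p.1 p.2) (Icc t₀ t₁ ×ˢ Icc a b) (s, x))
    (hs : s ∈ Ioc t₀ t₁) (hx : x ∈ Ioo a b) : q ≤ 0 := by
  obtain ⟨D, c, hD, hc, rfl⟩ := hq
  have hmin' : ∀ s' ∈ Icc t₀ t₁, ∀ x' ∈ Icc a b, Z s x ≤ Z s' x' :=
    fun s' hs' x' hx' => hmin (mk_mem_prod hs' hx')
  have hc0 : 0 ≤ c := hc.nonneg_of_isLocalMin <| by
    filter_upwards [Icc_mem_nhds hx.1 hx.2] with x' hx'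
    exact hmin' s (Ioc_subset_Icc_self hs) x' hx'
  have hD0 : D ≤ 0 := hasDerivAt_nonpos_of_eventually_le_nhdsLT hD <| by
    filter_upwards [Ioo_mem_nhdsLT hs.1] with r hr
    exact hmin' r ⟨hr.1.le, hr.2.le.trans hs.2⟩ x (Ioo_subset_Icc_self hx)
  linarith

theorem nonneg_of_lowerSemicontinuousOn_of_heatOp_pos
    (hlsc : LowerSemicontinuousOn (fun p : ℝ × ℝ => Z p.1 p.2) (Icc t₀ t₁ ×ˢ Icc a b))
    (hbot : ∀ x ∈ Icc a b, 0 ≤ Z t₀ x)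
    (hleft : ∀ τ ∈ Icc t₀ t₁, 0 ≤ Z τ a) (hright : ∀ τ ∈ Icc t₀ t₁, 0 ≤ Z τ b)
    (hZ : ∀ τ ∈ Ioc t₀ t₁, ∀ x ∈ Ioo a b, ∃ q > 0, HasHeatOpAt Z q τ x)
    {τ x : ℝ} (hτ : τ ∈ Icc t₀ t₁) (hx : x ∈ Icc a b) : 0 ≤ Z τ x := by
  obtain ⟨⟨s, y⟩, ⟨hs, hy⟩, hmin⟩ := hlsc.exists_isMinOn
    (⟨(τ, x), hτ, hx⟩ : (Icc t₀ t₁ ×ˢ Icc a b).Nonempty) (isCompact_Icc.prod isCompact_Icc)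
  simp only at hs hy
  refine le_trans ?_ (hmin (mk_mem_prod hτ hx))
  rcases hs.1.eq_or_lt with rfl | hs0
  · exact hbot y hy
  rcases hy.1.eq_or_lt with rfl | hya
  · exact hleft s hs
  rcases hy.2.eq_or_lt with rfl | hyb
  · exact hright s hs
  obtain ⟨q, hq, hqZ⟩ := hZ s ⟨hs0, hs.2⟩ y ⟨hya, hyb⟩
  exact absurd (heatOp_nonpos_of_isMinOn hqZ hmin ⟨hs0, hs.2⟩ ⟨hya, hyb⟩) hq.not_ge

end MinimumPrinciple

/-- The Gauss–Weierstrass kernel of `∂ₜ - ∂ₓ²`. -/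
noncomputable def heatKernel (τ x : ℝ) : ℝ :=
  (√(4 * Real.pi * τ))⁻¹ * Real.exp (-(x ^ 2 / (4 * τ)))

/-- The solution at time `τ` of the heat equation with initial datum `g`, encoded as a Gaussian
average so that `τ = 0` gives `g` itself. -/
noncomputable def heatFlow (g : ℝ → ℝ) (τ x : ℝ) : ℝ :=
  ∫ ξ, g (x + √(2 * τ) * ξ) ∂gaussianReal 0 1

section HeatKernel

variable {τ τ₀ x : ℝ}

theorem heatKernel_nonneg : 0 ≤ heatKernel τ x := by
  unfold heatKernel; positivity

theorem abs_mul_heatKernel_le {r B : ℝ} (hτ₀ : 0 < τ₀) (hτ : τ₀ ≤ τ)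
    (hr : |r| * Real.exp (-(x ^ 2 / (4 * τ))) ≤ B) :
    |r * heatKernel τ x| ≤ (√(4 * Real.pi * τ₀))⁻¹ * B := by
  rw [abs_mul, abs_of_nonneg heatKernel_nonneg, heatKernel, mul_left_comm]
  gcongr

theorem abs_heatKernel_le (hτ₀ : 0 < τ₀) (hτ : τ₀ ≤ τ) :
    |heatKernel τ x| ≤ (√(4 * Real.pi * τ₀))⁻¹ := by
  have hexp : Real.exp (-(x ^ 2 / (4 * τ))) ≤ 1 :=
    Real.exp_le_one_iff.2 (neg_nonpos.2 (by have := hτ₀.trans_le hτ; positivity))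
  simpa using abs_mul_heatKernel_le (r := 1) (B := 1) hτ₀ hτ (by simpa using hexp)

theorem continuous_heatKernel : Continuous (heatKernel τ) := by
  unfold heatKernel; fun_prop

theorem hasDerivAt_heatKernel (τ x : ℝ) :
    HasDerivAt (heatKernel τ) (-(x / (2 * τ)) * heatKernel τ x) x := by
  have hexponent : HasDerivAt (fun x : ℝ => -(x ^ 2 / (4 * τ))) (-(2 * x / (4 * τ))) x :=
    (((hasDerivAt_pow 2 x).div_const (4 * τ)).neg).congr_deriv (by simp)
  refine (hexponent.exp.const_mul (√(4 * Real.pi * τ))⁻¹).congr_deriv ?_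
  unfold heatKernel
  ring

theorem hasDerivAt_mul_heatKernel (τ x : ℝ) :
    HasDerivAt (fun x => -(x / (2 * τ)) * heatKernel τ x)
      ((x ^ 2 / (4 * τ ^ 2) - 1 / (2 * τ)) * heatKernel τ x) x := by
  have hlinear : HasDerivAt (fun x : ℝ => -(x / (2 * τ))) (-(1 / (2 * τ))) x :=
    ((hasDerivAt_id x).div_const (2 * τ)).neg
  exact (hlinear.mul (hasDerivAt_heatKernel τ x)).congr_deriv (by ring)

theorem hasDerivAt_heatKernel_time (hτ : 0 < τ) :
    HasDerivAt (fun τ => heatKernel τ x)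
      ((x ^ 2 / (4 * τ ^ 2) - 1 / (2 * τ)) * heatKernel τ x) τ := by
  have hpos : 0 < 4 * Real.pi * τ := by positivity
  have hroot : HasDerivAt (fun τ => √(4 * Real.pi * τ)) _ τ :=
    (((hasDerivAt_id τ).const_mul (4 * Real.pi)).congr_deriv (mul_one _)).sqrt hpos.ne'
  have hexponent : HasDerivAt (fun τ => -(x ^ 2 / (4 * τ))) (x ^ 2 / (4 * τ ^ 2)) τ := by
    have := ((((hasDerivAt_id τ).const_mul 4).inv (by simpa using hτ.ne')).const_mul (x ^ 2)).neg
    simp only [div_eq_mul_inv]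
    refine this.congr_deriv ?_
    simp only [id]
    field_simp
  refine ((hroot.inv (Real.sqrt_ne_zero'.2 hpos)).mul hexponent.exp).congr_deriv ?_
  simp only [id, Pi.inv_apply, heatKernel, Real.sq_sqrt hpos.le]
  field_simp [Real.sqrt_ne_zero'.2 hpos]
  ring

theorem mul_exp_neg_le_one (q : ℝ) : q * Real.exp (-q) ≤ 1 := by
  rw [Real.exp_neg, ← div_eq_mul_inv, div_le_one (Real.exp_pos _)]
  linarith [Real.add_one_le_exp q]

theorem abs_deriv_heatKernel_le (hτ₀ : 0 < τ₀) (hτ : τ₀ ≤ τ) :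
    |-(x / (2 * τ)) * heatKernel τ x| ≤ (√(4 * Real.pi * τ₀))⁻¹ * (1 / τ₀ + 1) := by
  have hτ' : 0 < τ := hτ₀.trans_le hτ
  refine abs_mul_heatKernel_le hτ₀ hτ ?_
  set q := x ^ 2 / (4 * τ) with hq
  have hfactor : |-(x / (2 * τ))| ≤ 1 / τ + q := by
    rw [abs_neg, abs_div, abs_of_pos (show 0 < 2 * τ by positivity), hq, ← sub_nonneg]
    have : 1 / τ + x ^ 2 / (4 * τ) - |x| / (2 * τ) = ((|x| - 1) ^ 2 + 3) / (4 * τ) := by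
      rw [← sq_abs x]; field_simp; ring
    rw [this]; positivity
  calc |-(x / (2 * τ))| * Real.exp (-q)
      ≤ (1 / τ + q) * Real.exp (-q) := by gcongr
    _ = 1 / τ * Real.exp (-q) + q * Real.exp (-q) := by ring
    _ ≤ 1 / τ₀ * 1 + 1 := by
      gcongr
      · exact Real.exp_le_one_iff.2 (neg_nonpos.2 (by positivity))
      · exact mul_exp_neg_le_one q
    _ = 1 / τ₀ + 1 := by ring

theorem abs_deriv_deriv_heatKernel_le (hτ₀ : 0 < τ₀) (hτ : τ₀ ≤ τ) :
    |(x ^ 2 / (4 * τ ^ 2) - 1 / (2 * τ)) * heatKernel τ x| ≤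
      (√(4 * Real.pi * τ₀))⁻¹ * (2 / τ₀) := by
  have hτ' : 0 < τ := hτ₀.trans_le hτ
  refine abs_mul_heatKernel_le hτ₀ hτ ?_
  set q := x ^ 2 / (4 * τ) with hq
  have hq0 : 0 ≤ q := by positivity
  have hfactor : |x ^ 2 / (4 * τ ^ 2) - 1 / (2 * τ)| ≤ 1 / τ * (q + 1) := by
    have : x ^ 2 / (4 * τ ^ 2) - 1 / (2 * τ) = 1 / τ * (q - 1 / 2) := by
      rw [hq]; field_simp
    rw [this, abs_mul, abs_of_pos (show 0 < 1 / τ by positivity)]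
    gcongr
    rw [abs_le]; constructor <;> linarith
  calc |x ^ 2 / (4 * τ ^ 2) - 1 / (2 * τ)| * Real.exp (-q)
      ≤ 1 / τ * (q + 1) * Real.exp (-q) := by gcongr
    _ = 1 / τ * (q * Real.exp (-q) + Real.exp (-q)) := by ring
    _ ≤ 1 / τ₀ * (1 + 1) := by
      gcongr
      · exact mul_exp_neg_le_one q
      · exact Real.exp_le_one_iff.2 (neg_nonpos.2 hq0)
    _ = 2 / τ₀ := by ring

end HeatKernel

theorem map_add_sqrt_mul_gaussianReal (x : ℝ) (v : ℝ≥0) :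
    (gaussianReal 0 1).map (fun ξ => x + √v * ξ) = gaussianReal x v := by
  have hscale : (gaussianReal 0 1).map (√v * ·) = gaussianReal 0 v := by
    rw [gaussianReal_map_const_mul, mul_zero, mul_one]
    congr 1
    exact NNReal.eq (Real.sq_sqrt v.2)
  have hshift := gaussianReal_map_const_add (μ := 0) (v := v) x
  rwa [← hscale, zero_add, Measure.map_map (by fun_prop) (by fun_prop)] at hshift

theorem hasDerivAt_integral_mul_of_bound {g : ℝ → ℝ} (hgi : Integrable g) {k k' : ℝ → ℝ → ℝ}
    {C C' θ : ℝ} {s : Set ℝ} (hs : s ∈ 𝓝 θ) (hk : ∀ θ, Continuous (k θ))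
    (hk_le : ∀ y, |k θ y| ≤ C) (hk' : Continuous (k' θ)) (hk'_le : ∀ θ ∈ s, ∀ y, |k' θ y| ≤ C')
    (hd : ∀ θ ∈ s, ∀ y, HasDerivAt (fun θ => k θ y) (k' θ y) θ) :
    HasDerivAt (fun θ => ∫ y, k θ y * g y) (∫ y, k' θ y * g y) θ := by
  refine (hasDerivAt_integral_of_dominated_loc_of_deriv_le (bound := fun y => C' * |g y|) hs
    (.of_forall fun θ => (hk θ).aestronglyMeasurable.mul hgi.1)
    (hgi.bdd_mul (hk θ).aestronglyMeasurable (.of_forall hk_le))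
    (hk'.aestronglyMeasurable.mul hgi.1) (.of_forall fun y θ hθ => ?_)
    (hgi.abs.const_mul C') (.of_forall fun y θ hθ => (hd θ hθ y).mul_const _)).2
  rw [Real.norm_eq_abs, abs_mul]
  exact mul_le_mul_of_nonneg_right (hk'_le θ hθ y) (abs_nonneg _)

section HeatFlow

variable {g : ℝ → ℝ} {τ x M : ℝ}

theorem heatFlow_zero : heatFlow g 0 x = g x := by
  simp [heatFlow]

theorem heatFlow_nonneg (hg : ∀ y, 0 ≤ g y) : 0 ≤ heatFlow g τ x :=
  integral_nonneg fun _ => hg _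

theorem integrable_comp_gaussianReal (hg : Continuous g) (hM : ∀ y, |g y| ≤ M) :
    Integrable (fun ξ => g (x + √(2 * τ) * ξ)) (gaussianReal 0 1) :=
  Integrable.of_bound (by fun_prop) M (.of_forall fun ξ => hM _)

theorem heatFlow_add_const (hg : Continuous g) (hM : ∀ y, |g y| ≤ M) (c : ℝ) :
    heatFlow (fun y => g y + c) τ x = heatFlow g τ x + c := by
  rw [heatFlow, integral_add (integrable_comp_gaussianReal hg hM) (integrable_const c)]
  simp [heatFlow]

theorem heatFlow_le (hg : Continuous g) (hM : ∀ y, |g y| ≤ M) : heatFlow g τ x ≤ M := by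
  have := integral_mono (integrable_comp_gaussianReal (x := x) (τ := τ) hg hM)
    (integrable_const M) fun ξ => (abs_le.1 (hM _)).2
  simpa [heatFlow] using this

theorem continuous_heatFlow (hg : Continuous g) (hM : ∀ y, |g y| ≤ M) :
    Continuous fun p : ℝ × ℝ => heatFlow g p.1 p.2 :=
  continuous_of_dominated (bound := fun _ => M)
    (fun _ => (hg.comp (by fun_prop)).aestronglyMeasurable)
    (fun _ => .of_forall fun _ => hM _) (integrable_const M)
    (.of_forall fun _ => hg.comp (by fun_prop))

theorem heatFlow_eq_integral_heatKernel (hg : Continuous g) (hτ : 0 < τ) :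
    heatFlow g τ x = ∫ y, heatKernel τ (x - y) * g y := by
  have hcoe : (Real.toNNReal (2 * τ) : ℝ) = 2 * τ := Real.coe_toNNReal _ (by positivity)
  have hmap := map_add_sqrt_mul_gaussianReal x (Real.toNNReal (2 * τ))
  rw [hcoe] at hmap
  unfold heatFlow
  rw [← integral_map (φ := fun ξ => x + √(2 * τ) * ξ) (f := g) (by fun_prop)
    hg.aestronglyMeasurable, hmap, integral_gaussianReal_eq_integral_smul (by simpa using hτ)]
  refine integral_congr_ae (.of_forall fun y => ?_)
  simp only [gaussianPDFReal, heatKernel, smul_eq_mul, hcoe]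
  ring_nf

theorem heatFlow_le_integral (hg : Continuous g) (hg0 : ∀ y, 0 ≤ g y) (hgi : Integrable g)
    (hτ : 0 < τ) : heatFlow g τ x ≤ (√(4 * Real.pi * τ))⁻¹ * ∫ y, g y := by
  rw [heatFlow_eq_integral_heatKernel hg hτ, ← integral_const_mul]
  exact integral_mono_of_nonneg (.of_forall fun y => mul_nonneg heatKernel_nonneg (hg0 y))
    (hgi.const_mul _) (.of_forall fun y => mul_le_mul_of_nonneg_right
      ((le_abs_self _).trans (abs_heatKernel_le hτ le_rfl)) (hg0 y))

theorem hasDerivAt_heatFlow_time (hg : Continuous g) (hgi : Integrable g) (hτ : 0 < τ) :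
    HasDerivAt (fun τ => heatFlow g τ x)
      (∫ y, ((x - y) ^ 2 / (4 * τ ^ 2) - 1 / (2 * τ)) * heatKernel τ (x - y) * g y) τ := by
  have hτ2 : 0 < τ / 2 := by positivity
  have hcont (τ : ℝ) : Continuous fun y => heatKernel τ (x - y) :=
    continuous_heatKernel.comp (by fun_prop)
  have hkernel : (fun τ => heatFlow g τ x) =ᶠ[𝓝 τ] fun τ => ∫ y, heatKernel τ (x - y) * g y := by
    filter_upwards [lt_mem_nhds hτ] with τ' hτ'
    exact heatFlow_eq_integral_heatKernel hg hτ'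
  refine HasDerivAt.congr_of_eventuallyEq ?_ hkernel
  exact hasDerivAt_integral_mul_of_bound hgi (k := fun τ y => heatKernel τ (x - y))
    (k' := fun τ y => ((x - y) ^ 2 / (4 * τ ^ 2) - 1 / (2 * τ)) * heatKernel τ (x - y))
    (Ioi_mem_nhds (half_lt_self hτ)) hcont (fun y => abs_heatKernel_le hτ le_rfl)
    (Continuous.mul (by fun_prop) (hcont τ))
    (fun θ hθ y => abs_deriv_deriv_heatKernel_le hτ2 (le_of_lt hθ))
    (fun θ hθ y => hasDerivAt_heatKernel_time (hτ2.trans hθ))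

theorem hasDerivAt_heatFlow (hg : Continuous g) (hgi : Integrable g) (hτ : 0 < τ) :
    HasDerivAt (heatFlow g τ) (∫ y, -((x - y) / (2 * τ)) * heatKernel τ (x - y) * g y) x := by
  have hcont (x : ℝ) : Continuous fun y => heatKernel τ (x - y) :=
    continuous_heatKernel.comp (by fun_prop)
  have hkernel : heatFlow g τ = fun x => ∫ y, heatKernel τ (x - y) * g y :=
    funext fun x => heatFlow_eq_integral_heatKernel hg hτ
  rw [hkernel]
  exact hasDerivAt_integral_mul_of_bound hgi (k := fun x y => heatKernel τ (x - y))
    (k' := fun x y => -((x - y) / (2 * τ)) * heatKernel τ (x - y))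
    univ_mem hcont (fun y => abs_heatKernel_le hτ le_rfl)
    (Continuous.mul (by fun_prop) (hcont x))
    (fun θ _ y => abs_deriv_heatKernel_le hτ le_rfl)
    (fun θ _ y => HasDerivAt.comp_sub_const θ y (hasDerivAt_heatKernel τ (θ - y)))

theorem hasSecondDerivAt_heatFlow (hg : Continuous g) (hgi : Integrable g) (hτ : 0 < τ) :
    HasSecondDerivAt (heatFlow g τ)
      (∫ y, ((x - y) ^ 2 / (4 * τ ^ 2) - 1 / (2 * τ)) * heatKernel τ (x - y) * g y) x := by
  have hcont (x : ℝ) : Continuous fun y => heatKernel τ (x - y) :=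
    continuous_heatKernel.comp (by fun_prop)
  refine ⟨_, fun x => hasDerivAt_heatFlow hg hgi hτ, ?_⟩
  exact hasDerivAt_integral_mul_of_bound hgi
    (k := fun x y => -((x - y) / (2 * τ)) * heatKernel τ (x - y))
    (k' := fun x y => ((x - y) ^ 2 / (4 * τ ^ 2) - 1 / (2 * τ)) * heatKernel τ (x - y))
    univ_mem (fun x => Continuous.mul (by fun_prop) (hcont x))
    (fun y => abs_deriv_heatKernel_le hτ le_rfl) (Continuous.mul (by fun_prop) (hcont x))
    (fun θ _ y => abs_deriv_deriv_heatKernel_le hτ le_rfl)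
    (fun θ _ y => HasDerivAt.comp_sub_const θ y (hasDerivAt_mul_heatKernel τ (θ - y)))

theorem hasHeatOpAt_heatFlow (hg : Continuous g) (hgi : Integrable g) (hτ : 0 < τ) :
    HasHeatOpAt (heatFlow g) 0 τ x :=
  ⟨_, _, hasDerivAt_heatFlow_time hg hgi hτ, hasSecondDerivAt_heatFlow hg hgi hτ, sub_self _⟩

end HeatFlow

/-- The negative part of `φ` on `[a, b]`, extended by zero. -/
noncomputable def negPartOn (a b : ℝ) (φ : ℝ → ℝ) : ℝ → ℝ :=
  (Icc a b).indicator fun y => max (-φ y) 0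

section NegPartOn

variable {a b M : ℝ} {φ : ℝ → ℝ}

theorem negPartOn_nonneg (y : ℝ) : 0 ≤ negPartOn a b φ y :=
  indicator_nonneg (fun _ _ => le_max_right _ _) y

theorem neg_le_negPartOn {y : ℝ} (hy : y ∈ Icc a b) : -φ y ≤ negPartOn a b φ y := by
  rw [negPartOn, indicator_of_mem hy]
  exact le_max_left _ _

theorem negPartOn_le_indicator (hM : ∀ y ∈ Icc a b, |φ y| ≤ M) (y : ℝ) :
    negPartOn a b φ y ≤ (Icc a b).indicator (fun _ => M) y :=
  indicator_le_indicator' fun hy =>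
    max_le ((neg_le_abs _).trans (hM y hy)) ((abs_nonneg _).trans (hM y hy))

theorem abs_negPartOn_le (hab : a ≤ b) (hM : ∀ y ∈ Icc a b, |φ y| ≤ M) (y : ℝ) :
    |negPartOn a b φ y| ≤ M := by
  rw [abs_of_nonneg (negPartOn_nonneg y)]
  exact (negPartOn_le_indicator hM y).trans <| indicator_apply_le' (fun _ => le_rfl)
    fun _ => (abs_nonneg _).trans (hM a (left_mem_Icc.2 hab))

theorem continuous_negPartOn (hφ : ContinuousOn φ (Icc a b)) (ha : 0 ≤ φ a) (hb : 0 ≤ φ b) :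
    Continuous (negPartOn a b φ) := by
  refine continuous_indicator (fun y hy => ?_) ?_
  · rcases le_or_gt a b with hab | hab
    · rw [frontier_Icc hab] at hy
      rcases hy with rfl | rfl <;> simpa
    · simp [Icc_eq_empty hab.not_ge] at hy
  · rw [isClosed_Icc.closure_eq]
    exact hφ.neg.sup continuousOn_const

theorem integrable_negPartOn (hφ : ContinuousOn φ (Icc a b)) : Integrable (negPartOn a b φ) :=
  (hφ.neg.sup continuousOn_const).integrableOn_Icc.integrable_indicator measurableSet_Icc

theorem tendsto_integral_negPartOn {ι : Type*} {l : Filter ι} [l.IsCountablyGenerated]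
    {Φ : ι → ℝ → ℝ} (hΦ : ∀ᶠ i in l, ContinuousOn (Φ i) (Icc a b))
    (hM : ∀ᶠ i in l, ∀ y ∈ Icc a b, |Φ i y| ≤ M)
    (hlim : ∀ y ∈ Icc a b, Tendsto (fun i => Φ i y) l (𝓝 (φ y)))
    (hφ : ∀ y ∈ Icc a b, 0 ≤ φ y) :
    Tendsto (fun i => ∫ y, negPartOn a b (Φ i) y) l (𝓝 0) := by
  have hlim0 : Tendsto (fun i => ∫ y, negPartOn a b (Φ i) y) l (𝓝 (∫ _ : ℝ, (0 : ℝ))) := by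
    refine tendsto_integral_filter_of_dominated_convergence
      (indicator (Icc a b) fun _ => M) ?_ ?_ ?_ (.of_forall fun y => ?_)
    · filter_upwards [hΦ] with i hi
      exact (integrable_negPartOn hi).1
    · filter_upwards [hM] with i hi
      refine .of_forall fun y => ?_
      rw [Real.norm_of_nonneg (negPartOn_nonneg y)]
      exact negPartOn_le_indicator hi y
    · exact (integrable_indicator_iff measurableSet_Icc).2 (by simp)
    · by_cases hy : y ∈ Icc a b
      · have := (hlim y hy).neg.max (tendsto_const_nhds (x := (0 : ℝ)))
        rw [max_eq_right (neg_nonpos.2 (hφ y hy))] at this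
        simpa only [negPartOn, indicator_of_mem hy] using this
      · simp only [negPartOn, indicator_of_notMem hy, tendsto_const_nhds]
  simpa using hlim0

end NegPartOn

theorem exists_last_time_nonneg {K : Set ℝ} {t₀ t₁ : ℝ} {Z : ℝ → ℝ → ℝ} (ht : t₀ ≤ t₁)
    (hcont : ∀ x ∈ K, ContinuousOn (fun τ => Z τ x) (Icc t₀ t₁)) (hbot : ∀ x ∈ K, 0 ≤ Z t₀ x)
    (hneg : ∃ x ∈ K, Z t₁ x < 0) :
    ∃ c ∈ Ico t₀ t₁, (∀ x ∈ K, 0 ≤ Z c x) ∧ ∀ τ ∈ Ioc c t₁, ∃ x ∈ K, Z τ x < 0 := by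
  set A : Set ℝ := Icc t₀ t₁ ∩ ⋂ x ∈ K, Icc t₀ t₁ ∩ (fun τ => Z τ x) ⁻¹' Ici 0
  have hA_closed : IsClosed A := isClosed_Icc.inter <| isClosed_biInter fun x hx =>
    (hcont x hx).preimage_isClosed_of_isClosed isClosed_Icc isClosed_Ici
  have hmem_A {τ : ℝ} : τ ∈ A ↔ τ ∈ Icc t₀ t₁ ∧ ∀ x ∈ K, 0 ≤ Z τ x := by
    simp +contextual [A]
  have hA_bdd : BddAbove A := ⟨t₁, fun τ hτ => hτ.1.2⟩
  have hsup : sSup A ∈ A :=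
    hA_closed.csSup_mem ⟨t₀, hmem_A.2 ⟨left_mem_Icc.2 ht, hbot⟩⟩ hA_bdd
  obtain ⟨hc, hc_nonneg⟩ := hmem_A.1 hsup
  obtain ⟨x, hx, hx_neg⟩ := hneg
  refine ⟨sSup A, ⟨hc.1, hc.2.lt_of_ne fun h => ?_⟩, hc_nonneg, fun τ hτ => ?_⟩
  · exact (hc_nonneg x hx).not_gt (h ▸ hx_neg)
  · by_contra! h
    exact (le_csSup hA_bdd (hmem_A.2 ⟨⟨hc.1.trans hτ.1.le, hτ.2⟩, h⟩)).not_gt hτ.1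

section SliceMinimumPrinciple

variable {a b t₀ t₁ M : ℝ} {Z : ℝ → ℝ → ℝ}

theorem add_heatFlow_nonneg_of_lowerSemicontinuousOn {g : ℝ → ℝ} (hg : Continuous g)
    (hgi : Integrable g) (hgM : ∀ y, |g y| ≤ M) (hg0 : ∀ y, 0 ≤ g y)
    (hlsc : LowerSemicontinuousOn (fun p : ℝ × ℝ => Z p.1 p.2) (Icc t₀ t₁ ×ˢ Icc a b))
    (hbot : ∀ x ∈ Icc a b, 0 ≤ Z t₀ x + g x)
    (hleft : ∀ τ ∈ Icc t₀ t₁, 0 ≤ Z τ a) (hright : ∀ τ ∈ Icc t₀ t₁, 0 ≤ Z τ b)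
    (hZ : ∀ τ ∈ Ioc t₀ t₁, ∀ x ∈ Ioo a b, ∃ q > 0, HasHeatOpAt Z q τ x)
    {τ x : ℝ} (hτ : τ ∈ Icc t₀ t₁) (hx : x ∈ Icc a b) : 0 ≤ Z τ x + heatFlow g (τ - t₀) x := by
  have hcont : Continuous fun p : ℝ × ℝ => heatFlow g (p.1 - t₀) p.2 :=
    (continuous_heatFlow hg hgM).comp
      ((continuous_fst.sub continuous_const).prodMk continuous_snd)
  refine nonneg_of_lowerSemicontinuousOn_of_heatOp_pos
    (Z := fun τ x => Z τ x + heatFlow g (τ - t₀) x)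
    (hlsc.add (hcont.lowerSemicontinuous.lowerSemicontinuousOn _))
    (fun y hy => by simpa [heatFlow_zero] using hbot y hy)
    (fun s hs => add_nonneg (hleft s hs) (heatFlow_nonneg hg0))
    (fun s hs => add_nonneg (hright s hs) (heatFlow_nonneg hg0)) (fun s hs y hy => ?_) hτ hx
  obtain ⟨q, hq, hqZ⟩ := hZ s hs y hy
  exact ⟨q + 0, by simpa using hq,
    hqZ.add (hasHeatOpAt_heatFlow hg hgi (sub_pos.2 hs.1)).comp_sub_const⟩

theorem add_integral_negPartOn_nonneg (hab : a ≤ b) (hcont : ContinuousOn (Z t₀) (Icc a b))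
    (hM : ∀ x ∈ Icc a b, |Z t₀ x| ≤ M)
    (hlsc : LowerSemicontinuousOn (fun p : ℝ × ℝ => Z p.1 p.2) (Icc t₀ t₁ ×ˢ Icc a b))
    (hleft : ∀ τ ∈ Icc t₀ t₁, 0 ≤ Z τ a) (hright : ∀ τ ∈ Icc t₀ t₁, 0 ≤ Z τ b)
    (hZ : ∀ τ ∈ Ioc t₀ t₁, ∀ x ∈ Ioo a b, ∃ q > 0, HasHeatOpAt Z q τ x) (ht : t₀ < t₁)
    {x : ℝ} (hx : x ∈ Icc a b) :
    0 ≤ Z t₁ x + (√(4 * Real.pi * (t₁ - t₀)))⁻¹ * ∫ y, negPartOn a b (Z t₀) y := by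
  have ht₀ : t₀ ∈ Icc t₀ t₁ := left_mem_Icc.2 ht.le
  have hg := continuous_negPartOn hcont (hleft t₀ ht₀) (hright t₀ ht₀)
  have hgi := integrable_negPartOn hcont
  refine (add_heatFlow_nonneg_of_lowerSemicontinuousOn hg hgi (abs_negPartOn_le hab hM)
    negPartOn_nonneg hlsc (fun y hy => ?_) hleft hright hZ (right_mem_Icc.2 ht.le) hx).trans ?_
  · linarith [neg_le_negPartOn (φ := Z t₀) hy]
  · gcongr
    exact heatFlow_le_integral hg negPartOn_nonneg hgi (sub_pos.2 ht)

-- The `L¹ → L^∞` smoothing of the heat flow is what replaces semicontinuity at the last time `c`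
-- at which the slice is nonnegative: the negative part of `Z` at times `σ > c` tends to zero in
-- `L¹` as `σ → c`, by dominated convergence, though perhaps not uniformly.
theorem nonneg_of_lowerSemicontinuousAt_of_neg
    (hcx : ∀ τ ∈ Icc t₀ t₁, ContinuousOn (Z τ) (Icc a b))
    (hct : ∀ x ∈ Icc a b, ContinuousOn (fun τ => Z τ x) (Icc t₀ t₁))
    (hM : ∀ τ ∈ Icc t₀ t₁, ∀ x ∈ Icc a b, |Z τ x| ≤ M)
    (hbot : ∀ x ∈ Icc a b, 0 ≤ Z t₀ x)
    (hleft : ∀ τ ∈ Icc t₀ t₁, 0 ≤ Z τ a) (hright : ∀ τ ∈ Icc t₀ t₁, 0 ≤ Z τ b)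
    (hlsc : ∀ τ ∈ Ioc t₀ t₁, (∃ x ∈ Icc a b, Z τ x < 0) → ∀ x ∈ Icc a b,
      LowerSemicontinuousAt (fun p : ℝ × ℝ => Z p.1 p.2) (τ, x))
    (hZ : ∀ τ ∈ Ioc t₀ t₁, ∀ x ∈ Ioo a b, ∃ q > 0, HasHeatOpAt Z q τ x)
    {τ x : ℝ} (hτ : τ ∈ Icc t₀ t₁) (hx : x ∈ Icc a b) : 0 ≤ Z τ x := by
  by_contra! hneg
  have hsub : Icc t₀ τ ⊆ Icc t₀ t₁ := Icc_subset_Icc_right hτ.2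
  obtain ⟨c, hc, hc_nonneg, hc_last⟩ := exists_last_time_nonneg hτ.1
    (fun y hy => (hct y hy).mono hsub) hbot ⟨x, hx, hneg⟩
  have hIcc {σ : ℝ} (hσ : σ ∈ Ioc c τ) : σ ∈ Ioc t₀ t₁ :=
    ⟨hc.1.trans_lt hσ.1, hσ.2.trans hτ.2⟩
  have hlower : ∀ σ ∈ Ioo c τ,
      0 ≤ Z τ x + (√(4 * Real.pi * (τ - σ)))⁻¹ * ∫ y, negPartOn a b (Z σ) y := by
    intro σ hσ
    have hlate {s : ℝ} (hs : s ∈ Icc σ τ) : s ∈ Ioc c τ := ⟨hσ.1.trans_le hs.1, hs.2⟩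
    have hσ' := Ioc_subset_Icc_self (hIcc (Ioo_subset_Ioc_self hσ))
    exact add_integral_negPartOn_nonneg (hx.1.trans hx.2) (hcx σ hσ') (hM σ hσ')
      (fun p hp => (hlsc p.1 (hIcc (hlate hp.1)) (hc_last p.1 (hlate hp.1)) p.2
        hp.2).lowerSemicontinuousWithinAt _)
      (fun s hs => hleft s (Ioc_subset_Icc_self (hIcc (hlate hs))))
      (fun s hs => hright s (Ioc_subset_Icc_self (hIcc (hlate hs))))
      (fun s hs => hZ s (hIcc (hlate (Ioc_subset_Icc_self hs)))) hσ.2 hx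
  have hnear : ∀ᶠ σ in 𝓝[>] c, σ ∈ Ioo c τ := Ioo_mem_nhdsGT hc.2
  have hmem : ∀ᶠ σ in 𝓝[>] c, σ ∈ Icc t₀ t₁ :=
    hnear.mono fun σ hσ => Ioc_subset_Icc_self (hIcc (Ioo_subset_Ioc_self hσ))
  have hintegral : Tendsto (fun σ => ∫ y, negPartOn a b (Z σ) y) (𝓝[>] c) (𝓝 0) :=
    tendsto_integral_negPartOn (hmem.mono hcx) (hmem.mono hM)
      (fun y hy => ((hct y hy).continuousWithinAt (hsub (Ico_subset_Icc_self hc))).mono_left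
        (nhdsWithin_le_iff.2 hmem)) hc_nonneg
  have hroot : Tendsto (fun σ => (√(4 * Real.pi * (τ - σ)))⁻¹) (𝓝[>] c)
      (𝓝 (√(4 * Real.pi * (τ - c)))⁻¹) := by
    have hpos : 0 < 4 * Real.pi * (τ - c) := mul_pos (by positivity) (sub_pos.2 hc.2)
    have hcont : Continuous fun σ => √(4 * Real.pi * (τ - σ)) := by fun_prop
    exact (hcont.tendsto c |>.mono_left nhdsWithin_le_nhds).inv₀ (Real.sqrt_ne_zero'.2 hpos)
  have := ge_of_tendsto ((hroot.mul hintegral).const_add (Z τ x)) (hnear.mono hlower)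
  simp only [mul_zero, add_zero] at this
  exact this.not_gt hneg

end SliceMinimumPrinciple

-- Baire's theorem in the locally compact space `Ω \ G`: if that space were nonempty, one of the
-- `A n` would contain a nonempty relatively open piece `U \ G` of it.
theorem subset_of_isOpen_of_forall_diff_subset {X : Type*} [TopologicalSpace X] [R1Space X]
    [LocallyCompactSpace X] {Ω G : Set X} (hΩ : IsOpen Ω) (hG : IsOpen G) {A : ℕ → Set X}
    (hA_closed : ∀ n, closure (A n) ∩ Ω ⊆ A n) (hA_cover : Ω ⊆ ⋃ n, A n)
    (hstep : ∀ n U, IsOpen U → U ⊆ Ω → U \ G ⊆ A n → U ⊆ G) : Ω ⊆ G := by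
  by_contra hsub
  have : Nonempty ↥(Ω \ G) := (sdiff_nonempty.2 hsub).to_subtype
  have : LocallyCompactSpace ↥(Ω \ G) :=
    (hΩ.isLocallyClosed.inter hG.isClosed_compl.isLocallyClosed).locallyCompactSpace
  let B (n : ℕ) : Set ↥(Ω \ G) := Subtype.val ⁻¹' A n
  have hB_closed (n : ℕ) : IsClosed (B n) := by
    have : B n = Subtype.val ⁻¹' closure (A n) :=
      Subset.antisymm (preimage_mono subset_closure) fun q hq => hA_closed n ⟨hq, q.2.1⟩
    exact this ▸ isClosed_closure.preimage continuous_subtype_val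
  obtain ⟨n, q, hq⟩ := nonempty_interior_of_iUnion_of_closed hB_closed <|
    eq_univ_of_forall fun q => by simpa [B] using hA_cover q.2.1
  obtain ⟨U, hU, hU_eq⟩ := isOpen_induced_iff.1 (isOpen_interior (s := B n))
  have hqU : q.1 ∈ U := by rwa [← hU_eq] at hq
  refine q.2.2 (hstep n (U ∩ Ω) (hU.inter hΩ) inter_subset_right ?_ ⟨hqU, q.2.1⟩)
  rintro r ⟨⟨hrU, hrΩ⟩, hrG⟩
  have hr : (⟨r, hrΩ, hrG⟩ : ↥(Ω \ G)) ∈ interior (B n) := hU_eq ▸ hrU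
  exact (interior_subset hr : (⟨r, hrΩ, hrG⟩ : ↥(Ω \ G)) ∈ B n)

theorem exists_abs_sub_le_of_hasDerivAt {g : ℝ → ℝ} {D a N : ℝ} {S : Set ℝ}
    (hg : HasDerivAt g D a) (ha : a ∈ S) (hN : ∀ b ∈ S, |g b| ≤ N) :
    ∃ K, ∀ b ∈ S, |g b - g a| ≤ K * |b - a| := by
  obtain ⟨c, hc⟩ := hg.isBigO_sub.bound
  obtain ⟨r, hr, hball⟩ := Metric.eventually_nhds_iff.1 hc
  refine ⟨max c (2 * N / r), fun b hb => ?_⟩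
  rcases lt_or_ge |b - a| r with hnear | hfar
  · exact (hball (y := b) hnear).trans
      (mul_le_mul_of_nonneg_right (le_max_left _ _) (abs_nonneg _))
  · have hN0 : 0 ≤ N := (abs_nonneg _).trans (hN a ha)
    calc |g b - g a| ≤ |g b| + |g a| := abs_sub _ _
      _ ≤ 2 * N := by linarith [hN b hb, hN a ha]
      _ = 2 * N / r * r := by field_simp
      _ ≤ 2 * N / r * |b - a| := by gcongr
      _ ≤ max c (2 * N / r) * |b - a| :=
        mul_le_mul_of_nonneg_right (le_max_right _ _) (abs_nonneg _)

/-- Functions on `(0, T) × ℝ` bounded by `N` with `∂ₜz - ∂ₓ²z > 0`; they are only assumed to be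
separately regular. -/
structure IsBoundedSupersolution (z : ℝ → ℝ → ℝ) (T N : ℝ) : Prop where
  abs_apply_le : ∀ s ∈ Ioo 0 T, ∀ x, |z s x| ≤ N
  exists_heatOp_pos : ∀ s ∈ Ioo 0 T, ∀ x, ∃ q > 0, HasHeatOpAt z q s x

/-- `z`, defined on `(0, T) × ℝ`, is `K`-Lipschitz at `p` along the horizontal and the vertical
line through `p`. -/
def IsCrossLipschitzAt (z : ℝ → ℝ → ℝ) (T K : ℝ) (p : ℝ × ℝ) : Prop :=
  (∀ s ∈ Ioo 0 T, |z s p.2 - z p.1 p.2| ≤ K * |s - p.1|) ∧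
    ∀ y, |z p.1 y - z p.1 p.2| ≤ K * |y - p.2|

theorem IsCrossLipschitzAt.sub_le {z : ℝ → ℝ → ℝ} {T K s x τ y : ℝ}
    (hp : IsCrossLipschitzAt z T K (s, x)) (hq : IsCrossLipschitzAt z T K (τ, y))
    (hs : s ∈ Ioo 0 T) (y' : ℝ) :
    z s x - z τ y' ≤ K * |y - x| + K * |s - τ| + K * |y' - y| := by
  have hspace := (abs_le.1 (hp.2 y)).1
  have htime := (abs_le.1 (hq.1 s hs)).2
  have hspace' := (abs_le.1 (hq.2 y')).1
  simp only at hspace htime hspace'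
  linarith

theorem div_sub_mem_Icc_of_mem_uIcc {x x₀ x₁ : ℝ} (hx : x ∈ uIcc x₀ x₁) :
    (x - x₀) / (x₁ - x₀) ∈ Icc (0 : ℝ) 1 := by
  rcases le_total x₀ x₁ with h | h
  · rw [uIcc_of_le h] at hx
    exact ⟨div_nonneg (sub_nonneg.2 hx.1) (sub_nonneg.2 h),
      div_le_one_of_le₀ (sub_le_sub_right hx.2 _) (sub_nonneg.2 h)⟩
  · rw [uIcc_of_ge h] at hx
    exact ⟨div_nonneg_of_nonpos (sub_nonpos.2 hx.2) (sub_nonpos.2 h),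
      div_le_one_of_ge (sub_le_sub_right hx.1 _) (sub_nonpos.2 h)⟩

namespace IsBoundedSupersolution

variable {z : ℝ → ℝ → ℝ} {T N : ℝ}

theorem continuousAt_time (h : IsBoundedSupersolution z T N) {s : ℝ} (hs : s ∈ Ioo 0 T)
    (x : ℝ) : ContinuousAt (fun τ => z τ x) s := by
  obtain ⟨_, -, _, _, hD, -⟩ := h.exists_heatOp_pos s hs x
  exact hD.continuousAt

theorem continuous_space (h : IsBoundedSupersolution z T N) {s : ℝ} (hs : s ∈ Ioo 0 T) :
    Continuous (z s) := by
  obtain ⟨_, -, _, _, -, hc, -⟩ := h.exists_heatOp_pos s hs 0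
  exact hc.continuous

theorem exists_isCrossLipschitzAt (h : IsBoundedSupersolution z T N) {p : ℝ × ℝ}
    (hp : p.1 ∈ Ioo 0 T) : ∃ n : ℕ, IsCrossLipschitzAt z T n p := by
  obtain ⟨_, -, _, _, hD, ⟨_, hf', -⟩, -⟩ := h.exists_heatOp_pos p.1 hp p.2
  obtain ⟨K₁, hK₁⟩ := exists_abs_sub_le_of_hasDerivAt hD hp fun b hb => h.abs_apply_le b hb p.2
  obtain ⟨K₂, hK₂⟩ := exists_abs_sub_le_of_hasDerivAt (hf' p.2) (mem_univ _)
    fun b _ => h.abs_apply_le p.1 hp b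
  obtain ⟨n, hn⟩ := exists_nat_ge (max K₁ K₂)
  refine ⟨n, fun s hs => (hK₁ s hs).trans ?_, fun y => (hK₂ y (mem_univ _)).trans ?_⟩
  · exact mul_le_mul_of_nonneg_right ((le_max_left _ _).trans hn) (abs_nonneg _)
  · exact mul_le_mul_of_nonneg_right ((le_max_right _ _).trans hn) (abs_nonneg _)

theorem isCrossLipschitzAt_of_mem_closure (h : IsBoundedSupersolution z T N) {K : ℝ} {p : ℝ × ℝ}
    (hp_mem : p ∈ closure {q | IsCrossLipschitzAt z T K q}) (hp : p.1 ∈ Ioo 0 T) :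
    IsCrossLipschitzAt z T K p := by
  obtain ⟨q, hq, hqp⟩ := mem_closure_iff_seq_limit.1 hp_mem
  have hq₁ : Tendsto (fun i => (q i).1) atTop (𝓝 p.1) := (continuous_fst.tendsto p).comp hqp
  have hq₂ : Tendsto (fun i => (q i).2) atTop (𝓝 p.2) := (continuous_snd.tendsto p).comp hqp
  have htime (y : ℝ) : Tendsto (fun i => z (q i).1 y) atTop (𝓝 (z p.1 y)) :=
    (h.continuousAt_time hp y).tendsto.comp hq₁
  have hspace (s : ℝ) (hs : s ∈ Ioo 0 T) :
      Tendsto (fun i => z s (q i).2) atTop (𝓝 (z s p.2)) :=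
    ((h.continuous_space hs).tendsto p.2).comp hq₂
  have hdiff : Tendsto (fun i => z (q i).1 p.2 - z (q i).1 (q i).2) atTop (𝓝 0) :=
    squeeze_zero_norm (fun i => (hq i).2 p.2) <| by
      simpa using ((tendsto_const_nhds (x := p.2)).sub hq₂).abs.const_mul K
  have hvalue : Tendsto (fun i => z (q i).1 (q i).2) atTop (𝓝 (z p.1 p.2)) := by
    simpa using (htime p.2).sub hdiff
  refine ⟨fun s hs => ?_, fun y => ?_⟩
  · exact le_of_tendsto_of_tendsto' ((hspace s hs).sub hvalue).abs
      ((tendsto_const_nhds.sub hq₁).abs.const_mul K) fun i => (hq i).1 s hs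
  · exact le_of_tendsto_of_tendsto' ((htime y).sub hvalue).abs
      ((tendsto_const_nhds.sub hq₂).abs.const_mul K) fun i => (hq i).2 y

theorem le_add_of_le_edge (h : IsBoundedSupersolution z T N) {m t₀ t₁ x₀ x₁ : ℝ}
    (hne : x₀ ≠ x₁) (ht : Icc t₀ t₁ ⊆ Ioo 0 T) (hbot : ∀ x ∈ uIcc x₀ x₁, m ≤ z t₀ x)
    (hedge : ∀ τ ∈ Icc t₀ t₁, m ≤ z τ x₀)
    (hlsc : ∀ τ ∈ Ioc t₀ t₁, (∃ x ∈ uIcc x₀ x₁, z τ x < m) → ∀ x ∈ uIcc x₀ x₁,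
      LowerSemicontinuousAt (fun p : ℝ × ℝ => z p.1 p.2) (τ, x))
    {τ x : ℝ} (hτ : τ ∈ Icc t₀ t₁) (hx : x ∈ uIcc x₀ x₁) :
    m ≤ z τ x + (N + |m|) * ((x - x₀) / (x₁ - x₀)) := by
  have hN : 0 ≤ N := (abs_nonneg _).trans (h.abs_apply_le τ (ht hτ) x)
  set ramp : ℝ → ℝ := fun x => (N + |m|) * ((x - x₀) / (x₁ - x₀)) with hramp
  have hramp_cont : Continuous fun x => ramp x - m := by fun_prop
  have hramp_mem {x : ℝ} (hx : x ∈ uIcc x₀ x₁) : ramp x ∈ Icc 0 (N + |m|) :=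
    have hfrac := div_sub_mem_Icc_of_mem_uIcc hx
    ⟨mul_nonneg (by positivity) hfrac.1, mul_le_of_le_one_right (by positivity) hfrac.2⟩
  have hend {x : ℝ} (hx : x = x₀ ∨ x = x₁) {τ : ℝ} (hτ : τ ∈ Icc t₀ t₁) :
      0 ≤ z τ x + (ramp x - m) := by
    rcases hx with rfl | rfl
    · simpa [ramp] using hedge τ hτ
    · have hone : ramp x = N + |m| := by
        rw [hramp]; simp only; rw [div_self (sub_ne_zero.2 hne.symm), mul_one]
      linarith [neg_le_of_abs_le (h.abs_apply_le τ (ht hτ) x), le_abs_self m]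
  suffices 0 ≤ z τ x + (ramp x - m) by linarith
  refine nonneg_of_lowerSemicontinuousAt_of_neg (Z := fun τ x => z τ x + (ramp x - m))
    (M := N + (N + |m| + |m|))
    (fun τ hτ => ((h.continuous_space (ht hτ)).add hramp_cont).continuousOn)
    (fun x _ τ hτ => ((h.continuousAt_time (ht hτ) x).add_const _).continuousWithinAt)
    (fun τ hτ x hx => ?_) (fun x hx => ?_) (fun τ hτ => hend (min_choice _ _) hτ)
    (fun τ hτ => hend (max_choice _ _) hτ) (fun τ hτ hneg x hx => ?_) (fun τ hτ x _ => ?_) hτ hx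
  · refine (abs_add_le _ _).trans (add_le_add (h.abs_apply_le τ (ht hτ) x) ((abs_sub _ _).trans ?_))
    rw [abs_of_nonneg (hramp_mem hx).1]
    exact add_le_add_left (hramp_mem hx).2 _
  · linarith [hbot x hx, (hramp_mem hx).1]
  · obtain ⟨y, hy, hy_neg⟩ := hneg
    have hlsc_z := hlsc τ hτ ⟨y, hy, by linarith [(hramp_mem hy).1]⟩ x hx
    exact hlsc_z.add (hramp_cont.comp continuous_snd).continuousAt.lowerSemicontinuousAt
  · obtain ⟨q, hq, hqz⟩ := h.exists_heatOp_pos τ (ht (Ioc_subset_Icc_self hτ)) x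
    refine ⟨q + 0, by simpa using hq, hqz.add ?_⟩
    convert hasHeatOpAt_quadratic (-(N + |m|) * (x₀ / (x₁ - x₀)) - m)
      ((N + |m|) / (x₁ - x₀)) 0 0 τ x using 2 with s y
    · ext y
      simp only [hramp]
      ring
    · norm_num

theorem le_add_of_isCrossLipschitzAt (h : IsBoundedSupersolution z T N) {K m t x₀ δ r : ℝ}
    (hK : 0 ≤ K) (hδ : 0 ≤ δ) (hr : 0 < r) (hp : IsCrossLipschitzAt z T K (t, x₀))
    (hnear : ∀ τ ∈ Icc (t - δ) (t + δ), ∀ x ∈ Icc (x₀ - r) (x₀ + r), τ ∈ Ioo 0 T ∧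
      (LowerSemicontinuousAt (fun p : ℝ × ℝ => z p.1 p.2) (τ, x) ∨ IsCrossLipschitzAt z T K (τ, x)))
    (hm : m + K * δ + 3 * (K * r) ≤ z t x₀)
    (hbot : ∀ x ∈ Icc (x₀ - r) (x₀ + r), m ≤ z (t - δ) x)
    {τ x : ℝ} (hτ : τ ∈ Icc (t - δ) (t + δ)) (hx : x ∈ Icc (x₀ - r) (x₀ + r)) :
    m ≤ z τ x + (N + |m|) * (|x - x₀| / r) := by
  have hx₀ : x₀ ∈ Icc (x₀ - r) (x₀ + r) := by simp [hr.le]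
  have ht : Icc (t - δ) (t + δ) ⊆ Ioo 0 T := fun τ hτ => (hnear τ hτ x₀ hx₀).1
  have htT : t ∈ Ioo 0 T := ht (by simp [hδ])
  have hdist {τ : ℝ} (hτ : τ ∈ Icc (t - δ) (t + δ)) : K * |t - τ| ≤ K * δ := by
    gcongr
    exact abs_le.2 ⟨by linarith [hτ.2], by linarith [hτ.1]⟩
  have hKr : 0 ≤ K * r := by positivity
  have hside (x₁ : ℝ) (hx₁ : x₁ ∈ Icc (x₀ - r) (x₀ + r)) (hne : x₀ ≠ x₁) (hx : x ∈ uIcc x₀ x₁) :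
      m ≤ z τ x + (N + |m|) * ((x - x₀) / (x₁ - x₀)) := by
    have hsub : uIcc x₀ x₁ ⊆ Icc (x₀ - r) (x₀ + r) := uIcc_subset_Icc hx₀ hx₁
    refine h.le_add_of_le_edge hne ht (fun x hx => hbot x (hsub hx)) (fun τ hτ => ?_)
      (fun τ hτ hlt x hx => ?_) hτ hx
    · have := (abs_le.1 (hp.1 τ (ht hτ))).1
      simp only [abs_sub_comm τ t] at this
      linarith [hdist hτ]
    · obtain ⟨x', hx', hlt⟩ := hlt
      refine (hnear τ (Ioc_subset_Icc_self hτ) x (hsub hx)).2.resolve_right fun hq => ?_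
      have hsum := hp.sub_le hq htT x'
      have hτ_le := hdist (Ioc_subset_Icc_self hτ)
      have hx_le : K * |x - x₀| ≤ K * r := by
        gcongr
        exact abs_le.2 ⟨by linarith [(hsub hx).1], by linarith [(hsub hx).2]⟩
      have hx'_le : K * |x' - x| ≤ K * (2 * r) := by
        gcongr
        exact abs_le.2 ⟨by linarith [(hsub hx).2, (hsub hx').1],
          by linarith [(hsub hx).1, (hsub hx').2]⟩
      linarith
  rcases le_total x₀ x with hle | hle
  · have := hside (x₀ + r) ⟨by linarith, le_rfl⟩ (by linarith : x₀ < x₀ + r).ne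
      (mem_uIcc_of_le hle hx.2)
    rwa [add_sub_cancel_left, ← abs_of_nonneg (sub_nonneg.2 hle)] at this
  · have := hside (x₀ - r) ⟨le_rfl, by linarith⟩ (by linarith : x₀ - r < x₀).ne'
      (mem_uIcc_of_ge hx.1 hle)
    rwa [sub_sub_cancel_left, div_neg, ← neg_div, ← abs_of_nonpos (sub_nonpos.2 hle)] at this

theorem exists_box_of_isCrossLipschitzAt (h : IsBoundedSupersolution z T N) {K m t x₀ e : ℝ}
    (hp : IsCrossLipschitzAt z T K (t, x₀)) (hm : m < z t x₀) (he : 0 < e)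
    (ht : ∀ τ, |τ - t| < e → τ ∈ Ioo 0 T) :
    ∃ δ ∈ Ioo 0 e, ∃ r ∈ Ioo 0 e, m + K * δ + 3 * (K * r) ≤ z t x₀ ∧
      ∀ x ∈ Icc (x₀ - r) (x₀ + r), m ≤ z (t - δ) x := by
  have hsmall (c : ℝ) {η : ℝ} (hη : 0 < η) : ∀ᶠ ρ in 𝓝[>] (0 : ℝ), c * ρ < η := by
    have : Tendsto (fun ρ => c * ρ) (𝓝[>] 0) (𝓝 (c * 0)) :=
      (tendsto_id.const_mul c).mono_left nhdsWithin_le_nhds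
    exact this.eventually_lt_const (by simpa using hη)
  have hgap : 0 < (z t x₀ - m) / 2 := by linarith
  obtain ⟨δ, hKδ, hδ⟩ := ((hsmall K hgap).and (Ioo_mem_nhdsGT he)).exists
  have htδ : t - δ ∈ Ioo 0 T := ht _ (by simpa [abs_of_pos hδ.1] using hδ.2)
  have hbot : m < z (t - δ) x₀ := by
    have := (abs_le.1 (hp.1 _ htδ)).1
    simp only [sub_sub_cancel_left, abs_neg, abs_of_pos hδ.1] at this
    linarith
  obtain ⟨ρ, hρ, hbot_near⟩ := Metric.eventually_nhds_iff.1
    ((h.continuous_space htδ).continuousAt.eventually_const_lt hbot)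
  obtain ⟨r, hKr, hr⟩ := ((hsmall (3 * K) hgap).and (Ioo_mem_nhdsGT (lt_min he hρ))).exists
  refine ⟨δ, hδ, r, ⟨hr.1, hr.2.trans_le (min_le_left _ _)⟩, by linarith, fun x hx => ?_⟩
  have hxr : |x - x₀| ≤ r := abs_le.2 ⟨by linarith [hx.1], by linarith [hx.2]⟩
  exact (hbot_near (hxr.trans_lt (hr.2.trans_le (min_le_right _ _)))).le

theorem lowerSemicontinuousAt_of_isCrossLipschitzAt (h : IsBoundedSupersolution z T N) {K : ℝ}
    (hK : 0 ≤ K) {p : ℝ × ℝ} (hp : IsCrossLipschitzAt z T K p)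
    (hnear : ∀ᶠ q in 𝓝 p, q.1 ∈ Ioo 0 T ∧
      (LowerSemicontinuousAt (fun p : ℝ × ℝ => z p.1 p.2) q ∨ IsCrossLipschitzAt z T K q)) :
    LowerSemicontinuousAt (fun p : ℝ × ℝ => z p.1 p.2) p := by
  obtain ⟨t, x₀⟩ := p
  intro y (hy : y < z t x₀)
  obtain ⟨m, hym, hmz⟩ := exists_between hy
  obtain ⟨e, he, hball⟩ := Metric.eventually_nhds_iff.1 hnear
  have hbox {τ x : ℝ} (hτ : |τ - t| < e) (hx : |x - x₀| < e) := hball (y := (τ, x)) (max_lt hτ hx)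
  obtain ⟨δ, hδ, r, hr, hm, hbot⟩ := h.exists_box_of_isCrossLipschitzAt hp hmz he
    fun τ hτ => (hbox (x := x₀) hτ (by simpa using he)).1
  have hlower {τ x : ℝ} (hτ : |τ - t| ≤ δ) (hx : |x - x₀| ≤ r) :
      m ≤ z τ x + (N + |m|) * (|x - x₀| / r) := by
    rw [← Real.dist_eq, ← Metric.mem_closedBall, Real.closedBall_eq_Icc] at hτ hx
    refine h.le_add_of_isCrossLipschitzAt hK hδ.1.le hr.1 hp (fun τ hτ x hx => ?_) hm hbot hτ hx
    rw [← Real.closedBall_eq_Icc] at hτ hx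
    exact hbox (hτ.trans_lt hδ.2) (hx.trans_lt hr.2)
  have htend : Tendsto (fun q : ℝ × ℝ => (N + |m|) * (|q.2 - x₀| / r)) (𝓝 (t, x₀)) (𝓝 0) := by
    have : Continuous fun q : ℝ × ℝ => (N + |m|) * (|q.2 - x₀| / r) := by fun_prop
    simpa using this.tendsto (t, x₀)
  filter_upwards [htend.eventually_lt_const (sub_pos.2 hym),
    Metric.closedBall_mem_nhds (t, x₀) (lt_min hδ.1 hr.1)] with q hq_ramp hq
  have hq_near : max |q.1 - t| |q.2 - x₀| ≤ min δ r := hq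
  have := hlower ((le_max_left _ _).trans (hq_near.trans (min_le_left _ _)))
    ((le_max_right _ _).trans (hq_near.trans (min_le_right _ _)))
  linarith

theorem lowerSemicontinuousAt (h : IsBoundedSupersolution z T N) {p : ℝ × ℝ}
    (hp : p.1 ∈ Ioo 0 T) : LowerSemicontinuousAt (fun p : ℝ × ℝ => z p.1 p.2) p := by
  set Z : ℝ × ℝ → ℝ := fun p => z p.1 p.2
  have hΩ : IsOpen {q : ℝ × ℝ | q.1 ∈ Ioo 0 T} := isOpen_Ioo.preimage continuous_fst
  have hsub := subset_of_isOpen_of_forall_diff_subset hΩ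
    (G := {q | ∀ᶠ q' in 𝓝 q, LowerSemicontinuousAt Z q'})
    (A := fun n => {q | IsCrossLipschitzAt z T n q}) isOpen_setOfPred_eventually_nhds
    (fun n q hq => h.isCrossLipschitzAt_of_mem_closure hq.1 hq.2)
    (fun q hq => mem_iUnion.2 (h.exists_isCrossLipschitzAt hq)) fun n U hU hUΩ hUG => ?_
  · exact (hsub hp).self_of_nhds
  have hdich (q) (hq : q ∈ U) : LowerSemicontinuousAt Z q ∨ IsCrossLipschitzAt z T n q :=
    or_iff_not_imp_left.2 fun hlsc => hUG ⟨hq, fun hG => hlsc hG.self_of_nhds⟩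
  intro q hq
  filter_upwards [hU.mem_nhds hq] with q' hq'
  refine (hdich q' hq').elim id fun hcross =>
    h.lowerSemicontinuousAt_of_isCrossLipschitzAt n.cast_nonneg hcross ?_
  filter_upwards [hU.mem_nhds hq'] with r hr
  exact ⟨hUΩ hr, hdich r hr⟩

end IsBoundedSupersolution

theorem exists_compactSupport_tendsto_of_nonneg {g : ℝ → ℝ} (hg : Continuous g)
    (hg0 : ∀ y, 0 ≤ g y) :
    ∃ φ : ℕ → ℝ → ℝ, (∀ k, Continuous (φ k)) ∧ (∀ k, HasCompactSupport (φ k)) ∧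
      (∀ k y, 0 ≤ φ k y) ∧ (∀ k y, φ k y ≤ g y) ∧
      ∀ y, Tendsto (fun k => φ k y) atTop (𝓝 (g y)) := by
  set χ : ℕ → ℝ → ℝ := fun k y => max 0 (min 1 (k + 1 - |y|)) with hχ
  have hχ_cont (k : ℕ) : Continuous (χ k) := by simp only [hχ]; fun_prop
  refine ⟨fun k y => χ k y * g y, fun k => (hχ_cont k).mul hg, fun k => .mul_right ?_,
    fun k y => mul_nonneg (le_max_left _ _) (hg0 y),
    fun k y => mul_le_of_le_one_left (hg0 y) (max_le zero_le_one (min_le_left _ _)), fun y => ?_⟩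
  · refine .intro (isCompact_closedBall (0 : ℝ) (k + 1)) fun y hy => max_eq_left ?_
    rw [Metric.mem_closedBall, dist_zero_right, Real.norm_eq_abs, not_le] at hy
    exact (min_le_right _ _).trans (by linarith)
  · refine tendsto_const_nhds.congr' ?_
    filter_upwards [tendsto_natCast_atTop_atTop.eventually_ge_atTop |y|] with k hk
    simp only [hχ]
    rw [min_eq_left (by linarith), max_eq_right zero_le_one, one_mul]

theorem tendsto_heatFlow_of_abs_le {φ : ℕ → ℝ → ℝ} {g : ℝ → ℝ} {M τ x : ℝ}
    (hφ : ∀ k, Continuous (φ k)) (hM : ∀ k y, |φ k y| ≤ M)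
    (hlim : ∀ y, Tendsto (fun k => φ k y) atTop (𝓝 (g y))) :
    Tendsto (fun k => heatFlow (φ k) τ x) atTop (𝓝 (heatFlow g τ x)) :=
  tendsto_integral_of_dominated_convergence (fun _ => M)
    (fun k => ((hφ k).comp (by fun_prop)).aestronglyMeasurable) (integrable_const M)
    (fun k => .of_forall fun _ => hM k _) (.of_forall fun _ => hlim _)

namespace IsBoundedSupersolution

variable {z : ℝ → ℝ → ℝ} {T N s₁ s₂ x : ℝ}

theorem heatFlow_le_add_barrier (h : IsBoundedSupersolution z T N)
    (hz0 : ∀ s ∈ Ioo 0 T, ∀ x, 0 ≤ z s x) (hs₁ : 0 < s₁) (hs : s₁ ≤ s₂) (hs₂ : s₂ < T)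
    {g : ℝ → ℝ} (hg : Continuous g) (hgi : Integrable g) (hg0 : ∀ y, 0 ≤ g y)
    (hgz : ∀ y, g y ≤ z s₁ y) {L : ℝ} (hL : 0 < L) (hxL : |x| ≤ L) :
    heatFlow g (s₂ - s₁) x ≤ z s₂ x + N / L ^ 2 * (x ^ 2 + 2 * (s₂ - s₁)) := by
  have ht {τ : ℝ} (hτ : τ ∈ Icc s₁ s₂) : τ ∈ Ioo 0 T :=
    ⟨hs₁.trans_le hτ.1, hτ.2.trans_lt hs₂⟩
  have hs₁T := ht (left_mem_Icc.2 hs)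
  have hN : 0 ≤ N := (abs_nonneg _).trans (h.abs_apply_le s₁ hs₁T 0)
  have hgN (y : ℝ) : |g y| ≤ N :=
    (abs_le_abs_of_nonneg (hg0 y) (hgz y)).trans (h.abs_apply_le s₁ hs₁T y)
  set B : ℝ → ℝ → ℝ := fun τ y => N / L ^ 2 * (y ^ 2 + 2 * (τ - s₁)) with hB
  have hB_heatOp (τ y : ℝ) : HasHeatOpAt B 0 τ y := by
    convert hasHeatOpAt_quadratic (-(N / L ^ 2 * 2 * s₁)) 0 (N / L ^ 2) (N / L ^ 2 * 2) τ y using 1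
    · ext τ y
      simp only [hB]
      ring
    · ring
  have hedge {τ : ℝ} (hτ : τ ∈ Icc s₁ s₂) {y : ℝ} (hy : y ^ 2 = L ^ 2) :
      0 ≤ z τ y + (-heatFlow g (τ - s₁) y + B τ y) := by
    have hBN : N ≤ B τ y := by
      have : 0 ≤ N / L ^ 2 * (2 * (τ - s₁)) := mul_nonneg (by positivity) (by linarith [hτ.1])
      rw [hB]
      simp only
      rw [hy, mul_add, div_mul_cancel₀ N (by positivity)]
      linarith
    linarith [hz0 τ (ht hτ) y, heatFlow_le (τ := τ - s₁) (x := y) hg hgN]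
  suffices 0 ≤ z s₂ x + (-heatFlow g (s₂ - s₁) x + B s₂ x) by linarith
  refine nonneg_of_lowerSemicontinuousOn_of_heatOp_pos (t₀ := s₁) (t₁ := s₂) (a := -L) (b := L)
    (Z := fun τ y => z τ y + (-heatFlow g (τ - s₁) y + B τ y))
    (LowerSemicontinuousOn.add
      (fun p hp => (h.lowerSemicontinuousAt (ht hp.1)).lowerSemicontinuousWithinAt _)
      (Continuous.continuousOn ?_).lowerSemicontinuousOn)
    (fun y _ => ?_) (fun τ hτ => hedge hτ (neg_sq L)) (fun τ hτ => hedge hτ rfl)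
    (fun τ hτ y _ => ?_) (right_mem_Icc.2 hs) (abs_le.1 hxL)
  · exact ((continuous_heatFlow hg hgN).comp (by fun_prop : Continuous fun p : ℝ × ℝ =>
      (p.1 - s₁, p.2))).neg.add (by fun_prop)
  · have hB0 : 0 ≤ B s₁ y := by simp only [hB, sub_self]; positivity
    simp only [sub_self, heatFlow_zero]
    linarith [hgz y]
  · obtain ⟨q, hq, hqz⟩ := h.exists_heatOp_pos τ (ht (Ioc_subset_Icc_self hτ)) y
    have hflow := (hasHeatOpAt_heatFlow (x := y) hg hgi (sub_pos.2 hτ.1)).comp_sub_const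
    exact ⟨q + (-0 + 0), by simpa using hq, hqz.add (hflow.neg.add (hB_heatOp τ y))⟩

theorem heatFlow_le_of_integrable (h : IsBoundedSupersolution z T N)
    (hz0 : ∀ s ∈ Ioo 0 T, ∀ x, 0 ≤ z s x) (hs₁ : 0 < s₁) (hs : s₁ ≤ s₂) (hs₂ : s₂ < T)
    {g : ℝ → ℝ} (hg : Continuous g) (hgi : Integrable g) (hg0 : ∀ y, 0 ≤ g y)
    (hgz : ∀ y, g y ≤ z s₁ y) : heatFlow g (s₂ - s₁) x ≤ z s₂ x := by
  have hlim : Tendsto (fun L : ℝ => z s₂ x + N / L ^ 2 * (x ^ 2 + 2 * (s₂ - s₁))) atTop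
      (𝓝 (z s₂ x + 0 * (x ^ 2 + 2 * (s₂ - s₁)))) :=
    ((tendsto_const_nhds.div_atTop (tendsto_pow_atTop two_ne_zero)).mul_const _).const_add _
  rw [zero_mul, add_zero] at hlim
  refine ge_of_tendsto hlim ?_
  filter_upwards [eventually_gt_atTop 0, eventually_ge_atTop |x|] with L hL hxL
  exact h.heatFlow_le_add_barrier hz0 hs₁ hs hs₂ hg hgi hg0 hgz hL hxL

theorem heatFlow_le (h : IsBoundedSupersolution z T N) (hz0 : ∀ s ∈ Ioo 0 T, ∀ x, 0 ≤ z s x)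
    (hs₁ : 0 < s₁) (hs : s₁ ≤ s₂) (hs₂ : s₂ < T) : heatFlow (z s₁) (s₂ - s₁) x ≤ z s₂ x := by
  have hs₁T : s₁ ∈ Ioo 0 T := ⟨hs₁, hs.trans_lt hs₂⟩
  obtain ⟨φ, hφ, hφ_supp, hφ0, hφ_le, hφ_lim⟩ :=
    exists_compactSupport_tendsto_of_nonneg (h.continuous_space hs₁T) (hz0 s₁ hs₁T)
  refine le_of_tendsto' (tendsto_heatFlow_of_abs_le hφ (M := N) (fun k y => ?_) hφ_lim) fun k =>
    h.heatFlow_le_of_integrable hz0 hs₁ hs hs₂ (hφ k)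
      ((hφ k).integrable_of_hasCompactSupport (hφ_supp k)) (hφ0 k) (hφ_le k)
  exact (abs_le_abs_of_nonneg (hφ0 k y) (hφ_le k y)).trans (h.abs_apply_le s₁ hs₁T y)

end IsBoundedSupersolution

namespace HasSecondDerivAt

variable {Φ : ℝ → ℝ} {b c x M : ℝ}

theorem exists_abs_taylor_le_mul_sq (h : HasSecondDerivAt Φ c x) (hb : HasDerivAt Φ b x)
    (hM : ∀ y, |Φ y| ≤ M) : ∃ K, ∀ k, |Φ (x + k) - Φ x - k * b| ≤ K * k ^ 2 := by
  have hnear := (h.tendsto_taylor hb).abs.eventually_lt_const (lt_add_one _)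
  obtain ⟨r, hr, hball⟩ := Metric.eventually_nhds_iff.1 (eventually_nhdsWithin_iff.1 hnear)
  refine ⟨max (|c / 2| + 1) (2 * M / r ^ 2 + |b| / r), fun k => ?_⟩
  rcases eq_or_ne k 0 with rfl | hk0
  · simp
  have hk2 : 0 < k ^ 2 := by positivity
  rcases lt_or_ge |k| r with hk | hk
  · have hquot := hball (y := k) (by simpa using hk) hk0
    rw [abs_div, abs_of_pos hk2, div_lt_iff₀ hk2] at hquot
    exact hquot.le.trans (mul_le_mul_of_nonneg_right (le_max_left _ _) hk2.le)
  · have hM0 : 0 ≤ M := (abs_nonneg _).trans (hM x)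
    have hconst : 2 * M ≤ 2 * M / r ^ 2 * k ^ 2 := by
      rw [← sq_abs k, div_mul_eq_mul_div, le_div_iff₀ (by positivity)]
      gcongr
    have hlin : |k * b| ≤ |b| / r * k ^ 2 := by
      rw [abs_mul, ← sq_abs k, div_mul_eq_mul_div, le_div_iff₀ hr, sq, mul_comm |k|, mul_assoc]
      gcongr
    calc |Φ (x + k) - Φ x - k * b| ≤ |Φ (x + k)| + |Φ x| + |k * b| :=
          (abs_sub _ _).trans (add_le_add_left (abs_sub _ _) _)
      _ ≤ (2 * M / r ^ 2 + |b| / r) * k ^ 2 := by linarith [hM (x + k), hM x]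
      _ ≤ _ := mul_le_mul_of_nonneg_right (le_max_right _ _) hk2.le

end HasSecondDerivAt

theorem integral_sq_gaussianReal_zero_one : ∫ ξ, ξ ^ 2 ∂gaussianReal 0 1 = 1 := by
  have h := variance_fun_id_gaussianReal (μ := 0) (v := 1)
  rw [variance_of_integral_eq_zero (by fun_prop) (by simp [integral_id_gaussianReal])] at h
  simpa using h

theorem heatFlow_sub_div_eq_integral_taylor {Φ : ℝ → ℝ} {τ x M : ℝ} (hΦ : Continuous Φ)
    (hM : ∀ y, |Φ y| ≤ M) (b : ℝ) :
    (heatFlow Φ τ x - Φ x) / τ =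
      ∫ ξ, (Φ (x + √(2 * τ) * ξ) - Φ x - √(2 * τ) * ξ * b) / τ ∂gaussianReal 0 1 := by
  have hcomp := integrable_comp_gaussianReal (x := x) (τ := τ) hΦ hM
  have hid : Integrable (fun ξ : ℝ => ξ) (gaussianReal 0 1) :=
    (memLp_id_gaussianReal 1).integrable (by simp)
  have hdiff : Integrable (fun ξ => Φ (x + √(2 * τ) * ξ) - Φ x) (gaussianReal 0 1) :=
    hcomp.sub (integrable_const _)
  rw [integral_div, integral_sub hdiff ((hid.const_mul _).mul_const _),
    integral_sub hcomp (integrable_const _), integral_mul_const, integral_const_mul,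
    integral_id_gaussianReal]
  simp [heatFlow]

theorem tendsto_taylor_sqrt_mul {Φ : ℝ → ℝ} {b c x : ℝ} (h : HasSecondDerivAt Φ c x)
    (hb : HasDerivAt Φ b x) (ξ : ℝ) :
    Tendsto (fun τ => (Φ (x + √(2 * τ) * ξ) - Φ x - √(2 * τ) * ξ * b) / τ) (𝓝[>] 0)
      (𝓝 (c * ξ ^ 2)) := by
  rcases eq_or_ne ξ 0 with rfl | hξ
  · simp
  have hstep : Tendsto (fun τ => √(2 * τ) * ξ) (𝓝[>] 0) (𝓝[≠] 0) := by
    refine tendsto_nhdsWithin_iff.2 ⟨?_, ?_⟩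
    · have : Continuous fun τ => √(2 * τ) * ξ := by fun_prop
      simpa using (this.tendsto 0).mono_left nhdsWithin_le_nhds
    · filter_upwards [self_mem_nhdsWithin] with τ (hτ : 0 < τ)
      exact mul_ne_zero (Real.sqrt_ne_zero'.2 (by positivity)) hξ
  have hlim := ((h.tendsto_taylor hb).comp hstep).mul_const (2 * ξ ^ 2)
  rw [show c / 2 * (2 * ξ ^ 2) = c * ξ ^ 2 by ring] at hlim
  refine hlim.congr' ?_
  filter_upwards [self_mem_nhdsWithin] with τ (hτ : 0 < τ)
  simp only [Function.comp_apply]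
  rw [mul_pow, Real.sq_sqrt (by positivity)]
  field_simp

theorem HasSecondDerivAt.tendsto_heatFlow_sub_div {Φ : ℝ → ℝ} {c x M : ℝ}
    (h : HasSecondDerivAt Φ c x) (hM : ∀ y, |Φ y| ≤ M) :
    Tendsto (fun τ => (heatFlow Φ τ x - Φ x) / τ) (𝓝[>] 0) (𝓝 c) := by
  obtain ⟨Φ', hΦ', -⟩ := id h
  obtain ⟨K, hK⟩ := h.exists_abs_taylor_le_mul_sq (hΦ' x) hM
  have hΦ := h.continuous
  simp only [heatFlow_sub_div_eq_integral_taylor hΦ hM (Φ' x)]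
  have hlim : Tendsto (fun τ => ∫ ξ, (Φ (x + √(2 * τ) * ξ) - Φ x - √(2 * τ) * ξ * Φ' x) / τ
      ∂gaussianReal 0 1) (𝓝[>] 0) (𝓝 (∫ ξ, c * ξ ^ 2 ∂gaussianReal 0 1)) := by
    refine tendsto_integral_filter_of_dominated_convergence (fun ξ => 2 * K * ξ ^ 2)
      (.of_forall fun τ => ?_) ?_ ((memLp_id_gaussianReal 2).integrable_sq.const_mul _)
      (.of_forall (tendsto_taylor_sqrt_mul h (hΦ' x)))
    · have hcomp : Continuous fun ξ => Φ (x + √(2 * τ) * ξ) := hΦ.comp (by fun_prop)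
      exact (((hcomp.sub continuous_const).sub (by fun_prop)).div_const τ).aestronglyMeasurable
    · filter_upwards [self_mem_nhdsWithin] with τ (hτ : 0 < τ)
      refine .of_forall fun ξ => ?_
      rw [Real.norm_eq_abs, abs_div, abs_of_pos hτ, div_le_iff₀ hτ]
      refine (hK _).trans_eq ?_
      rw [mul_pow, Real.sq_sqrt (by positivity)]
      ring
  rwa [integral_const_mul, integral_sq_gaussianReal_zero_one, mul_one] at hlim

section Correlation

variable {ζ ρ ρ' : ℝ → ℝ} {N : ℝ}

theorem integral_translate_mul (ζ ρ : ℝ → ℝ) (y : ℝ) :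
    ∫ x, ζ (x + y) * ρ x = ∫ x, ζ x * ρ (x - y) := by
  rw [← integral_add_right_eq_self (fun x => ζ x * ρ (x - y)) y]
  simp

theorem abs_integral_mul_le (hN : ∀ x, |ζ x| ≤ N) (hρ : Integrable ρ) :
    |∫ x, ζ x * ρ x| ≤ N * ∫ x, |ρ x| := by
  rw [← integral_const_mul, ← Real.norm_eq_abs]
  refine norm_integral_le_of_norm_le (hρ.abs.const_mul N) (.of_forall fun x => ?_)
  rw [Real.norm_eq_abs, abs_mul]
  exact mul_le_mul_of_nonneg_right (hN _) (abs_nonneg _)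

theorem continuous_integral_translate_mul (hζ : Continuous ζ) (hN : ∀ x, |ζ x| ≤ N)
    (hρ : Integrable ρ) : Continuous fun y => ∫ x, ζ (x + y) * ρ x := by
  refine continuous_of_dominated (bound := fun x => N * |ρ x|) (fun y => ?_)
    (fun y => .of_forall fun x => ?_) (hρ.abs.const_mul N) (.of_forall fun x => ?_)
  · exact (hζ.comp (by fun_prop)).aestronglyMeasurable.mul hρ.1
  · rw [Real.norm_eq_abs, abs_mul]
    exact mul_le_mul_of_nonneg_right (hN _) (abs_nonneg _)
  · exact (hζ.comp (by fun_prop)).mul continuous_const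

theorem integrable_mul_comp_sub (hζ : Continuous ζ) (hN : ∀ x, |ζ x| ≤ N) (hρ : Continuous ρ)
    (hρi : Integrable ρ) {μ : Measure ℝ} [IsFiniteMeasure μ] :
    Integrable (Function.uncurry fun x a => ζ x * ρ (x - a)) (volume.prod μ) := by
  have hmeas : AEStronglyMeasurable (Function.uncurry fun x a => ζ x * ρ (x - a))
      (volume.prod μ) :=
    ((hζ.comp continuous_fst).mul
      (hρ.comp (continuous_fst.sub continuous_snd))).aestronglyMeasurable
  refine (integrable_prod_iff' hmeas).2 ⟨.of_forall fun a =>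
    (hρi.comp_sub_right a).bdd_mul hζ.aestronglyMeasurable (.of_forall hN), ?_⟩
  refine .of_bound hmeas.prod_swap.norm.integral_prod_right' (N * ∫ x, |ρ x|)
    (.of_forall fun a => ?_)
  rw [Real.norm_eq_abs, abs_of_nonneg (integral_nonneg fun x => norm_nonneg _),
    ← integral_const_mul, ← integral_sub_right_eq_self (fun x => N * |ρ x|) a]
  refine integral_mono_of_nonneg (.of_forall fun x => norm_nonneg _)
    ((hρi.comp_sub_right a).abs.const_mul N) (.of_forall fun x => ?_)
  simp only [Function.uncurry_apply_pair, Real.norm_eq_abs, abs_mul]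
  exact mul_le_mul_of_nonneg_right (hN x) (abs_nonneg _)

theorem integral_translate_mul_eq_sub (hζ : Continuous ζ) (hN : ∀ x, |ζ x| ≤ N)
    (hρ : Integrable ρ) (hρ' : Integrable ρ') (hc : Continuous ρ')
    (hd : ∀ x, HasDerivAt ρ (ρ' x) x) (y : ℝ) :
    ∫ x, ζ (x + y) * ρ x = (∫ x, ζ x * ρ x) - ∫ a in (0 : ℝ)..y, ∫ x, ζ (x + a) * ρ' x := by
  have hint (a : ℝ) : Integrable fun x => ζ x * ρ (x - a) :=
    (hρ.comp_sub_right a).bdd_mul hζ.aestronglyMeasurable (.of_forall hN)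
  have hftc (x : ℝ) : ∫ a in (0 : ℝ)..y, ρ' (x - a) = ρ x - ρ (x - y) := by
    rw [intervalIntegral.integral_comp_sub_left, sub_zero]
    exact intervalIntegral.integral_eq_sub_of_hasDerivAt (fun x _ => hd x)
      (hc.intervalIntegrable _ _)
  have : IsFiniteMeasure (volume.restrict (uIoc 0 y)) := by
    rw [uIoc]
    infer_instance
  have hfubini : ∫ a in (0 : ℝ)..y, ∫ x, ζ (x + a) * ρ' x = ∫ x, ζ x * (ρ x - ρ (x - y)) := by
    simp_rw [integral_translate_mul ζ ρ', ← hftc, ← intervalIntegral.integral_const_mul,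
      intervalIntegral.intervalIntegral_eq_integral_uIoc, integral_smul]
    rw [integral_integral_swap (integrable_mul_comp_sub hζ hN hc hρ')]
  have hint₀ : Integrable fun x => ζ x * ρ x := by simpa using hint 0
  rw [hfubini, integral_translate_mul ζ ρ]
  simp_rw [mul_sub]
  rw [integral_sub hint₀ (hint y), sub_sub_cancel]

theorem hasDerivAt_integral_translate_mul (hζ : Continuous ζ) (hN : ∀ x, |ζ x| ≤ N)
    (hρ : Integrable ρ) (hρ' : Integrable ρ') (hc : Continuous ρ')
    (hd : ∀ x, HasDerivAt ρ (ρ' x) x) (y : ℝ) :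
    HasDerivAt (fun y => ∫ x, ζ (x + y) * ρ x) (-∫ x, ζ (x + y) * ρ' x) y := by
  rw [funext (integral_translate_mul_eq_sub hζ hN hρ hρ' hc hd)]
  exact ((continuous_integral_translate_mul hζ hN hρ').integral_hasStrictDerivAt 0
    y).hasDerivAt.const_sub _

theorem integral_heatFlow_mul {τ : ℝ} (hζ : Continuous ζ) (hN : ∀ x, |ζ x| ≤ N)
    (hρ : Integrable ρ) :
    ∫ x, heatFlow ζ τ x * ρ x = heatFlow (fun y => ∫ x, ζ (x + y) * ρ x) τ 0 := by
  have hint : Integrable (Function.uncurry fun x ξ => ζ (x + √(2 * τ) * ξ) * ρ x)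
      (volume.prod (gaussianReal 0 1)) :=
    (hρ.comp_fst _).bdd_mul (hζ.comp (by fun_prop)).aestronglyMeasurable (.of_forall fun _ => hN _)
  simp only [heatFlow, ← integral_mul_const, zero_add]
  exact integral_integral_swap hint

theorem tendsto_integral_heatFlow_sub_div {ρ'' : ℝ → ℝ} (hζ : Continuous ζ)
    (hN : ∀ x, |ζ x| ≤ N) (hρ : Integrable ρ) (hρ' : Integrable ρ') (hρ'' : Integrable ρ'')
    (hc : Continuous ρ'') (hd : ∀ x, HasDerivAt ρ (ρ' x) x)
    (hd' : ∀ x, HasDerivAt ρ' (ρ'' x) x) :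
    Tendsto (fun τ => ((∫ x, heatFlow ζ τ x * ρ x) - ∫ x, ζ x * ρ x) / τ) (𝓝[>] 0)
      (𝓝 (∫ x, ζ x * ρ'' x)) := by
  have hc' : Continuous ρ' := continuous_iff_continuousAt.2 fun x => (hd' x).continuousAt
  have hsecond : HasSecondDerivAt (fun y => ∫ x, ζ (x + y) * ρ x) (∫ x, ζ x * ρ'' x) 0 := by
    refine ⟨_, hasDerivAt_integral_translate_mul hζ hN hρ hρ' hc' hd, ?_⟩
    exact (hasDerivAt_integral_translate_mul hζ hN hρ' hρ'' hc hd' 0).neg.congr_deriv (by simp)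
  have hlim := hsecond.tendsto_heatFlow_sub_div fun y =>
    abs_integral_mul_le (fun x => hN (x + y)) hρ
  simp only [add_zero] at hlim
  exact hlim.congr fun τ => by rw [integral_heatFlow_mul hζ hN hρ]

end Correlation

/-- Bounded nonnegative functions on `(0, T) × ℝ`, separately continuous, for which
`∂ₜz - ∂ₓ²z ≥ -C` holds in integrated form, by comparison with the heat flow. -/
structure IsMildSupersolution (z : ℝ → ℝ → ℝ) (T N C : ℝ) : Prop where
  nonneg : ∀ s ∈ Ioo 0 T, ∀ x, 0 ≤ z s x
  abs_apply_le : ∀ s ∈ Ioo 0 T, ∀ x, |z s x| ≤ N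
  continuous_space : ∀ s ∈ Ioo 0 T, Continuous (z s)
  continuousAt_time : ∀ s ∈ Ioo 0 T, ∀ x, ContinuousAt (fun τ => z τ x) s
  heatFlow_le_add : ∀ s₁ ∈ Ioo 0 T, ∀ s₂ ∈ Ioo s₁ T, ∀ x,
    heatFlow (z s₁) (s₂ - s₁) x ≤ z s₂ x + C * (s₂ - s₁)

theorem isMildSupersolution_of_heatOp_gt {z : ℝ → ℝ → ℝ} {T N C : ℝ} (hC : 0 ≤ C)
    (hz0 : ∀ s ∈ Ioo 0 T, ∀ x, 0 ≤ z s x) (hzN : ∀ s ∈ Ioo 0 T, ∀ x, z s x ≤ N)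
    (hz : ∀ s ∈ Ioo 0 T, ∀ x, ∃ q > -C, HasHeatOpAt z q s x) : IsMildSupersolution z T N C := by
  have hzabs (s : ℝ) (hs : s ∈ Ioo 0 T) (x : ℝ) : |z s x| ≤ N :=
    abs_le.2 ⟨by linarith [hz0 s hs x, hzN s hs x], hzN s hs x⟩
  have hshift0 (s : ℝ) (hs : s ∈ Ioo 0 T) (x : ℝ) : 0 ≤ z s x + C * s :=
    add_nonneg (hz0 s hs x) (mul_nonneg hC hs.1.le)
  have hshift : IsBoundedSupersolution (fun s x => z s x + C * s) T (N + C * T) := by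
    refine ⟨fun s hs x => ?_, fun s hs x => ?_⟩
    · rw [abs_of_nonneg (hshift0 s hs x)]
      exact add_le_add (hzN s hs x) (mul_le_mul_of_nonneg_left hs.2.le hC)
    · obtain ⟨q, hq, hqz⟩ := hz s hs x
      refine ⟨q + C, by linarith, ?_⟩
      simpa using hqz.add (hasHeatOpAt_quadratic 0 0 0 C s x)
  have hspace (s : ℝ) (hs : s ∈ Ioo 0 T) : Continuous (z s) := by
    obtain ⟨_, -, _, _, -, hc, -⟩ := hz s hs 0
    exact hc.continuous
  refine ⟨hz0, hzabs, hspace, fun s hs x => ?_, fun s₁ hs₁ s₂ hs₂ x => ?_⟩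
  · obtain ⟨_, -, _, _, hD, -⟩ := hz s hs x
    exact hD.continuousAt
  · have hflow := hshift.heatFlow_le (x := x) hshift0 hs₁.1 hs₂.1.le hs₂.2
    rw [heatFlow_add_const (hspace s₁ hs₁) (hzabs s₁ hs₁)] at hflow
    linarith

theorem tendsto_integral_min_mul {ι : Type*} {l : Filter ι} [l.IsCountablyGenerated]
    {q : ι → ℝ → ℝ} {F ρ : ℝ → ℝ} {B : ℝ} (hF : Continuous F) (hρ : Integrable ρ)
    (hqc : ∀ᶠ i in l, Continuous (q i)) (hB : ∀ᶠ i in l, ∀ x, |min (q i x) (F x)| ≤ B)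
    (hlim : ∀ x, ∃ y ≥ F x, Tendsto (fun i => q i x) l (𝓝 y)) :
    Tendsto (fun i => ∫ x, min (q i x) (F x) * ρ x) l (𝓝 (∫ x, F x * ρ x)) := by
  refine tendsto_integral_filter_of_dominated_convergence (fun x => B * |ρ x|) ?_ ?_
    (hρ.abs.const_mul _) (.of_forall fun x => ?_)
  · filter_upwards [hqc] with i hi
    exact (hi.min hF).aestronglyMeasurable.mul hρ.1
  · filter_upwards [hB] with i hi
    refine .of_forall fun x => ?_
    rw [Real.norm_eq_abs, abs_mul]
    exact mul_le_mul_of_nonneg_right (hi x) (abs_nonneg _)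
  · obtain ⟨y, hy, hlimy⟩ := hlim x
    simpa only [min_eq_right hy] using
      (hlimy.min (tendsto_const_nhds (x := F x))).mul_const (ρ x)

theorem eventually_lt_integral_mul {ι : Type*} {l : Filter ι} [l.IsCountablyGenerated]
    {q : ι → ℝ → ℝ} {F ρ : ℝ → ℝ} {B C r : ℝ} (hF : Continuous F) (hB : ∀ x, |F x| ≤ B)
    (hρ : Integrable ρ) (hρ0 : ∀ x, 0 ≤ ρ x) (hqc : ∀ᶠ i in l, Continuous (q i))
    (hqi : ∀ᶠ i in l, Integrable fun x => q i x * ρ x) (hqC : ∀ᶠ i in l, ∀ x, -C ≤ q i x)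
    (hlim : ∀ x, ∃ y ≥ F x, Tendsto (fun i => q i x) l (𝓝 y))
    (hr : r < ∫ x, F x * ρ x) : ∀ᶠ i in l, r < ∫ x, q i x * ρ x := by
  have hbound : ∀ᶠ i in l, ∀ x, |min (q i x) (F x)| ≤ max C B := by
    filter_upwards [hqC] with i hi x
    refine abs_le.2 ⟨le_min ?_ ?_, ?_⟩
    · linarith [hi x, le_max_left C B]
    · linarith [(abs_le.1 (hB x)).1, le_max_right C B]
    · exact (min_le_right _ _).trans ((le_abs_self _).trans ((hB x).trans (le_max_right _ _)))
  have hmin := tendsto_integral_min_mul hF hρ hqc hbound hlim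
  filter_upwards [hmin.eventually_const_lt hr, hqc, hqi, hbound] with i hi hic hii hib
  refine hi.trans_le (integral_mono ?_ hii fun x =>
    mul_le_mul_of_nonneg_right (min_le_left _ _) (hρ0 x))
  exact hρ.bdd_mul (hic.min hF).aestronglyMeasurable (.of_forall hib)

/-- `ρ ≥ 0` solves the adjoint equation `∂ₜρ = -∂ₓ²ρ + V` at time `s`, is integrable together
with its space derivatives, and has difference quotients in time dominated by `g`. -/
structure IsAdjointWeightAt (ρ : ℝ → ℝ → ℝ) (V g : ℝ → ℝ) (s : ℝ) : Prop where
  contDiff : ContDiff ℝ 2 (ρ s)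
  nonneg : ∀ x, 0 ≤ ρ s x
  hasDerivAt_time : ∀ x, HasDerivAt (fun τ => ρ τ x) (-deriv (deriv (ρ s)) x + V x) s
  eventually_integrable : ∀ᶠ τ in 𝓝[≥] s, Integrable (ρ τ)
  integrable_deriv : Integrable (deriv (ρ s))
  integrable_deriv_deriv : Integrable (deriv (deriv (ρ s)))
  integrable_source : Integrable V
  integrable_bound : Integrable g
  eventually_abs_sub_le : ∀ᶠ τ in 𝓝[>] s, ∀ x, |ρ τ x - ρ s x| ≤ g x * (τ - s)

theorem IsAdjointWeightAt.integrable {ρ : ℝ → ℝ → ℝ} {V g : ℝ → ℝ} {s : ℝ}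
    (h : IsAdjointWeightAt ρ V g s) : Integrable (ρ s) :=
  h.eventually_integrable.self_of_nhdsWithin self_mem_Ici

theorem IsAdjointWeightAt.eventually_integrable_nhdsGT {ρ : ℝ → ℝ → ℝ} {V g : ℝ → ℝ} {s : ℝ}
    (h : IsAdjointWeightAt ρ V g s) : ∀ᶠ τ in 𝓝[>] s, Integrable (ρ τ) :=
  h.eventually_integrable.filter_mono (nhdsWithin_mono s Ioi_subset_Ici_self)

theorem tendsto_slope_nhdsGT_of_hasDerivAt {φ : ℝ → ℝ} {D s : ℝ} (h : HasDerivAt φ D s) :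
    Tendsto (fun τ => (φ τ - φ s) / (τ - s)) (𝓝[>] s) (𝓝 D) := by
  simpa only [slope_fun_def_field] using
    (hasDerivAt_iff_tendsto_slope.1 h).mono_left (nhdsGT_le_nhdsNE s)

theorem tendsto_sub_const_nhdsGT (s : ℝ) : Tendsto (fun τ => τ - s) (𝓝[>] s) (𝓝[>] 0) := by
  refine tendsto_nhdsWithin_iff.2 ⟨?_, ?_⟩
  · have : Continuous fun τ : ℝ => τ - s := by fun_prop
    simpa using (this.tendsto s).mono_left nhdsWithin_le_nhds
  · filter_upwards [self_mem_nhdsWithin] with τ hτ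
    exact sub_pos.2 (show s < τ from hτ)

namespace IsMildSupersolution

variable {z ρ : ℝ → ℝ → ℝ} {V g F : ℝ → ℝ} {T N B C s τ : ℝ}

theorem integrable_mul (h : IsMildSupersolution z T N C) (hs : s ∈ Ioo 0 T) {k : ℝ → ℝ}
    (hk : Integrable k) : Integrable fun x => z s x * k x :=
  hk.bdd_mul (h.continuous_space s hs).aestronglyMeasurable (.of_forall (h.abs_apply_le s hs))

theorem continuous_heatFlow_space (h : IsMildSupersolution z T N C) (hs : s ∈ Ioo 0 T) :
    Continuous (heatFlow (z s) τ) :=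
  (continuous_heatFlow (h.continuous_space s hs) (h.abs_apply_le s hs)).comp
    (by fun_prop : Continuous fun x => (τ, x))

theorem integrable_heatFlow_mul (h : IsMildSupersolution z T N C) (hs : s ∈ Ioo 0 T) {k : ℝ → ℝ}
    (hk : Integrable k) : Integrable fun x => heatFlow (z s) τ x * k x := by
  refine hk.bdd_mul (h.continuous_heatFlow_space hs).aestronglyMeasurable (c := N)
    (.of_forall fun x => ?_)
  rw [Real.norm_eq_abs, abs_of_nonneg (heatFlow_nonneg (h.nonneg s hs))]
  exact heatFlow_le (h.continuous_space s hs) (h.abs_apply_le s hs)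

theorem tendsto_integral_mul_slope_weight (h : IsMildSupersolution z T N C) (hs : s ∈ Ioo 0 T)
    (hρ : IsAdjointWeightAt ρ V g s) :
    Tendsto (fun τ => ∫ x, z τ x * ((ρ τ x - ρ s x) / (τ - s))) (𝓝[>] s)
      (𝓝 (∫ x, z s x * (-deriv (deriv (ρ s)) x + V x))) := by
  have hT : ∀ᶠ τ in 𝓝[>] s, τ ∈ Ioo s T := Ioo_mem_nhdsGT hs.2
  refine tendsto_integral_filter_of_dominated_convergence (fun x => N * g x) ?_ ?_
    (hρ.integrable_bound.const_mul _) (.of_forall fun x => ?_)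
  · filter_upwards [hT, hρ.eventually_integrable_nhdsGT] with τ hτ hτi
    exact (h.continuous_space τ ⟨hs.1.trans hτ.1, hτ.2⟩).aestronglyMeasurable.mul
      ((hτi.sub hρ.integrable).div_const _).1
  · filter_upwards [hT, hρ.eventually_abs_sub_le] with τ hτ hτg
    refine .of_forall fun x => ?_
    have hpos : 0 < τ - s := sub_pos.2 hτ.1
    have hzN := h.abs_apply_le τ ⟨hs.1.trans hτ.1, hτ.2⟩ x
    rw [Real.norm_eq_abs, abs_mul, abs_div, abs_of_pos hpos]
    exact mul_le_mul hzN ((div_le_iff₀ hpos).2 (hτg x)) (by positivity) ((abs_nonneg _).trans hzN)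
  · exact ((h.continuousAt_time s hs x).tendsto.mono_left nhdsWithin_le_nhds).mul
      (tendsto_slope_nhdsGT_of_hasDerivAt (hρ.hasDerivAt_time x))

theorem eventually_lt_integral_sub_heatFlow_div_mul (h : IsMildSupersolution z T N C)
    (hs : s ∈ Ioo 0 T) (hF : Continuous F) (hB : ∀ x, |F x| ≤ B)
    (hz : ∀ x, ∃ q ≥ F x, HasHeatOpAt z q s x) {k : ℝ → ℝ} (hk : Integrable k)
    (hk0 : ∀ x, 0 ≤ k x) {r : ℝ} (hr : r < ∫ x, F x * k x) :
    ∀ᶠ τ in 𝓝[>] s, r < ∫ x, (z τ x - heatFlow (z s) (τ - s) x) / (τ - s) * k x := by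
  have hT : ∀ᶠ τ in 𝓝[>] s, τ ∈ Ioo s T := Ioo_mem_nhdsGT hs.2
  refine eventually_lt_integral_mul (C := C) hF hB hk hk0 ?_ ?_ ?_ (fun x => ?_) hr
  · filter_upwards [hT] with τ hτ
    exact ((h.continuous_space τ ⟨hs.1.trans hτ.1, hτ.2⟩).sub
      (h.continuous_heatFlow_space hs)).div_const _
  · filter_upwards [hT] with τ hτ
    refine (((h.integrable_mul ⟨hs.1.trans hτ.1, hτ.2⟩ hk).sub
      (h.integrable_heatFlow_mul (τ := τ - s) hs hk)).div_const (τ - s)).congr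
      (.of_forall fun x => ?_)
    simp only [Pi.sub_apply]
    ring
  · filter_upwards [hT] with τ hτ x
    rw [le_div_iff₀ (sub_pos.2 hτ.1)]
    linarith [h.heatFlow_le_add s hs τ hτ x]
  · obtain ⟨_, hq, D, c, hD, hc, rfl⟩ := hz x
    refine ⟨D - c, hq, ?_⟩
    have htime := tendsto_slope_nhdsGT_of_hasDerivAt hD
    have hspace := (hc.tendsto_heatFlow_sub_div (h.abs_apply_le s hs)).comp
      (tendsto_sub_const_nhdsGT s)
    refine (htime.sub hspace).congr fun τ => ?_
    rw [Function.comp_apply, ← sub_div, sub_sub_sub_cancel_right]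

theorem slope_integral_mul_eq (h : IsMildSupersolution z T N C) (hs : s ∈ Ioo 0 T)
    (hτ : τ ∈ Ioo 0 T) (hρs : Integrable (ρ s)) (hρτ : Integrable (ρ τ)) :
    slope (fun σ => ∫ x, z σ x * ρ σ x) s τ =
      (∫ x, z τ x * ((ρ τ x - ρ s x) / (τ - s))) +
      (∫ x, (z τ x - heatFlow (z s) (τ - s) x) / (τ - s) * ρ s x) +
      ((∫ x, heatFlow (z s) (τ - s) x * ρ s x) - ∫ x, z s x * ρ s x) / (τ - s) := by
  have hweight : ∫ x, z τ x * ((ρ τ x - ρ s x) / (τ - s)) =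
      ((∫ x, z τ x * ρ τ x) - ∫ x, z τ x * ρ s x) / (τ - s) := by
    rw [← integral_sub (h.integrable_mul hτ hρτ) (h.integrable_mul hτ hρs), ← integral_div]
    simp only [← mul_sub, mul_div_assoc]
  have hflow : ∫ x, (z τ x - heatFlow (z s) (τ - s) x) / (τ - s) * ρ s x =
      ((∫ x, z τ x * ρ s x) - ∫ x, heatFlow (z s) (τ - s) x * ρ s x) / (τ - s) := by
    rw [← integral_sub (h.integrable_mul hτ hρs) (h.integrable_heatFlow_mul hs hρs),
      ← integral_div]
    simp only [← sub_mul, div_mul_eq_mul_div]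
  rw [hweight, hflow, slope_def_field]
  ring

-- The slope splits into the increments of `ρ`, of `z` beyond the heat flow of `z s`, and of that
-- heat flow; the first and the third converge, and the terms in `∂ₓ²ρ` cancel in the limit.
theorem eventually_lt_slope_integral (h : IsMildSupersolution z T N C) (hs : s ∈ Ioo 0 T)
    (hF : Continuous F) (hB : ∀ x, |F x| ≤ B) (hz : ∀ x, ∃ q ≥ F x, HasHeatOpAt z q s x)
    (hρ : IsAdjointWeightAt ρ V g s) {r : ℝ} (hr : r < ∫ x, (z s x * V x + F x * ρ s x)) :
    ∀ᶠ τ in 𝓝[>] s, r < slope (fun σ => ∫ x, z σ x * ρ σ x) s τ := by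
  have hweight := h.tendsto_integral_mul_slope_weight hs hρ
  have hflow := (tendsto_integral_heatFlow_sub_div (h.continuous_space s hs)
    (h.abs_apply_le s hs) hρ.integrable hρ.integrable_deriv hρ.integrable_deriv_deriv
    (hρ.contDiff.iterate_deriv' 0 2).continuous
    (fun x => (hρ.contDiff.differentiable (by norm_num) x).hasDerivAt) (fun x =>
      (hρ.contDiff.differentiable_deriv_two x).hasDerivAt)).comp (tendsto_sub_const_nhdsGT s)
  set S₁ := ∫ x, z s x * (-deriv (deriv (ρ s)) x + V x) with hS₁
  set S₂ := ∫ x, F x * ρ s x with hS₂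
  set S₃ := ∫ x, z s x * deriv (deriv (ρ s)) x with hS₃
  have hsum : (∫ x, (z s x * V x + F x * ρ s x)) = S₁ + S₂ + S₃ := by
    have hFρ : Integrable fun x => F x * ρ s x :=
      hρ.integrable.bdd_mul hF.aestronglyMeasurable (.of_forall hB)
    rw [integral_add (h.integrable_mul hs hρ.integrable_source) hFρ, add_right_comm, hS₁, hS₃,
      ← integral_add (h.integrable_mul hs
        (k := fun x => -deriv (deriv (ρ s)) x + V x)
        (hρ.integrable_deriv_deriv.neg.add hρ.integrable_source))
        (h.integrable_mul hs hρ.integrable_deriv_deriv)]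
    simp only [← mul_add, neg_add_cancel_comm, hS₂]
  obtain ⟨η, hη, hrη⟩ : ∃ η > 0, r + 3 * η < S₁ + S₂ + S₃ :=
    ⟨(S₁ + S₂ + S₃ - r) / 4, by linarith, by linarith⟩
  have hgain := h.eventually_lt_integral_sub_heatFlow_div_mul hs hF hB hz hρ.integrable hρ.nonneg
    (sub_lt_self S₂ hη)
  filter_upwards [hweight.eventually_const_lt (sub_lt_self S₁ hη), hgain,
    hflow.eventually_const_lt (sub_lt_self S₃ hη), Ioo_mem_nhdsGT hs.2,
    hρ.eventually_integrable_nhdsGT] with τ hτ₁ hτ₂ hτ₃ hτ hτi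
  rw [h.slope_integral_mul_eq hs ⟨hs.1.trans hτ.1, hτ.2⟩ hρ.integrable hτi]
  rw [Function.comp_apply] at hτ₃
  linarith

end IsMildSupersolution

section Dini

variable {F G G' J P : ℝ → ℝ} {a b x p : ℝ}

theorem sub_le_sub_of_forall_lt_slope (hab : a < b) (hF : ContinuousOn F (Icc a b))
    (hG : ContinuousOn G (Icc a b)) (hG' : ∀ x ∈ Ioo a b, HasDerivAt G (G' x) x)
    (hslope : ∀ x ∈ Ioo a b, ∀ r < G' x, ∀ᶠ τ in 𝓝[>] x, r < slope F x τ) :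
    G b - G a ≤ F b - F a := by
  have hinner : ∀ c ∈ Ioo a b, F c - G c ≤ F b - G b := by
    intro c hc
    have hsub : Icc c b ⊆ Icc a b := Icc_subset_Icc_left hc.1.le
    have hle := image_le_of_liminf_slope_right_le_deriv_boundary (f := fun y => -F y)
      (B := fun y => -F c + G c - G y) (B' := fun y => -G' y) (hF.mono hsub).neg (by simp)
      (continuousOn_const.sub (hG.mono hsub))
      (fun y hy => ((hG' y ⟨hc.1.trans_le hy.1, hy.2⟩).const_sub _).hasDerivWithinAt)
      (fun y hy r hr => ?_) (right_mem_Icc.2 hc.2.le)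
    · linarith
    · refine Eventually.frequently ?_
      filter_upwards [hslope y ⟨hc.1.trans_le hy.1, hy.2⟩ (-r) (by linarith)] with τ hτ
      rw [show slope (fun y => -F y) y τ = -slope F y τ from slope_neg F y τ]
      linarith
  have hlim : Tendsto (fun c => F c - G c) (𝓝[>] a) (𝓝 (F a - G a)) :=
    ((hF.sub hG) a (left_mem_Icc.2 hab.le)).mono_left
      (nhdsWithin_le_iff.2 (mem_of_superset (Ioo_mem_nhdsGT hab) Ioo_subset_Icc_self))
  have := le_of_tendsto hlim (mem_of_superset (Ioo_mem_nhdsGT hab) hinner)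
  linarith

theorem eventually_lt_slope_neg_inv (hJ : ContinuousAt J x) (hpos : 0 < J x)
    (hslope : ∀ r < J x ^ 2 * p, ∀ᶠ τ in 𝓝[>] x, r < slope J x τ) {r : ℝ} (hr : r < p) :
    ∀ᶠ τ in 𝓝[>] x, r < slope (fun s => -(J s)⁻¹) x τ := by
  obtain ⟨r', hr', hr'p⟩ := exists_between
    (mul_lt_mul_of_pos_left hr (show 0 < J x ^ 2 by positivity))
  have hlim : Tendsto (fun τ => r' / (J τ * J x)) (𝓝[>] x) (𝓝 (r' / (J x * J x))) :=
    (tendsto_const_nhds.div (hJ.tendsto.mul_const _) (by positivity)).mono_left nhdsWithin_le_nhds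
  have hlt : r < r' / (J x * J x) := by
    rw [lt_div_iff₀ (by positivity)]
    linarith
  filter_upwards [hslope r' hr'p, hlim.eventually_const_lt hlt,
    (hJ.eventually_const_lt hpos).filter_mono nhdsWithin_le_nhds,
    self_mem_nhdsWithin] with τ hτ hτr hJτ (hxτ : x < τ)
  refine hτr.trans ?_
  have hinv : slope (fun s => -(J s)⁻¹) x τ = slope J x τ / (J τ * J x) := by
    have := sub_pos.2 hxτ
    rw [slope_def_field, slope_def_field]
    field_simp
    ring
  rw [hinv]
  gcongr

theorem integral_inv_le_inv_of_riccati (hb : 0 < b) (hP : ∀ s ∈ Icc 0 b, 0 < P s)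
    (hPc : ContinuousOn P (Icc 0 b)) (hJc : ContinuousOn J (Icc 0 b)) (hJ0 : 0 < J 0)
    (hJ : ∀ s ∈ Ioo 0 b, ∀ r < J s ^ 2 / P s, ∀ᶠ τ in 𝓝[>] s, r < slope J s τ) :
    ∫ s in (0 : ℝ)..b, (P s)⁻¹ ≤ (J 0)⁻¹ := by
  have hJpos : ∀ s ∈ Icc 0 b, 0 < J s := by
    intro s hs
    rcases hs.1.eq_or_lt with rfl | hs0
    · exact hJ0
    have hsub : Icc 0 s ⊆ Icc 0 b := Icc_subset_Icc_right hs.2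
    have hmono := sub_le_sub_of_forall_lt_slope (G := fun _ => 0) (G' := fun _ => 0) hs0
      (hJc.mono hsub) continuousOn_const (fun x _ => hasDerivAt_const x _) fun x hx r hr =>
        hJ x ⟨hx.1, hx.2.trans_le hs.2⟩ r (hr.trans_le
          (div_nonneg (sq_nonneg _) (hP x (hsub (Ioo_subset_Icc_self hx))).le))
    linarith
  have hinv : ContinuousOn (fun s => (P s)⁻¹) (Icc 0 b) := hPc.inv₀ fun s hs => (hP s hs).ne'
  have hprim := intervalIntegral.continuousOn_primitive_interval' (μ := volume)
    (hinv.intervalIntegrable_of_Icc hb.le) left_mem_uIcc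
  rw [uIcc_of_le hb.le] at hprim
  have hle := sub_le_sub_of_forall_lt_slope (F := fun s => -(J s)⁻¹) (G' := fun s => (P s)⁻¹) hb
    (hJc.inv₀ fun s hs => (hJpos s hs).ne').neg hprim (fun s hs => ?_) fun s hs r hr => ?_
  · have := inv_pos.2 (hJpos b (right_mem_Icc.2 hb.le))
    rw [intervalIntegral.integral_same] at hle
    linarith
  · have hs' := Ioo_subset_Icc_self hs
    exact intervalIntegral.integral_hasDerivAt_right
      ((hinv.mono (Icc_subset_Icc_right hs'.2)).intervalIntegrable_of_Icc hs'.1)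
      ((hinv.mono Ioo_subset_Icc_self).stronglyMeasurableAtFilter isOpen_Ioo s hs)
      (hinv.continuousAt (Icc_mem_nhds hs.1 hs.2))
  · exact eventually_lt_slope_neg_inv (hJc.continuousAt (Icc_mem_nhds hs.1 hs.2))
      (hJpos s (Ioo_subset_Icc_self hs)) (hJ s hs) hr

theorem intervalIntegral_le_of_forall_lt (hab : a < b) {M : ℝ} (hM : 0 ≤ M)
    (h : ∀ c ∈ Ioo a b, ∫ s in a..c, F s ≤ M) : ∫ s in a..b, F s ≤ M := by
  by_cases hF : IntervalIntegrable F volume a b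
  · have hprim := intervalIntegral.continuousOn_primitive_interval' hF left_mem_uIcc b
      right_mem_uIcc
    have hlim : Tendsto (fun c => ∫ s in a..c, F s) (𝓝[<] b) (𝓝 (∫ s in a..b, F s)) :=
      hprim.mono_left (nhdsWithin_le_iff.2 (mem_of_superset (Ioo_mem_nhdsLT hab)
        (Ioo_subset_Icc_self.trans Icc_subset_uIcc)))
    exact le_of_tendsto hlim (mem_of_superset (Ioo_mem_nhdsLT hab) h)
  · rwa [intervalIntegral.integral_undef hF]

end Dini

/-- The bounded concave increasing function `v ↦ v / (1 + δ v)` on `[0, ∞)`. -/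
noncomputable def saturate (δ v : ℝ) : ℝ :=
  v / (1 + δ * v)

section Saturate

variable {δ : ℝ}

theorem saturate_pos {V : ℝ} (hδ : 0 < δ) (hV : 0 < V) : 0 < saturate δ V := by
  unfold saturate
  positivity

theorem saturate_nonneg {V : ℝ} (hδ : 0 < δ) (hV : 0 ≤ V) : 0 ≤ saturate δ V := by
  unfold saturate
  positivity

theorem saturate_le_inv {V : ℝ} (hδ : 0 < δ) (hV : 0 ≤ V) : saturate δ V ≤ δ⁻¹ := by
  rw [saturate, inv_eq_one_div, div_le_div_iff₀ (by positivity) hδ]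
  linarith

theorem hasDerivAt_saturate {V : ℝ} (hδ : 0 < δ) (hV : 0 ≤ V) :
    HasDerivAt (saturate δ) (1 / (1 + δ * V) ^ 2) V := by
  have hden : HasDerivAt (fun V => 1 + δ * V) (δ * 1) V :=
    ((hasDerivAt_id V).const_mul δ).const_add 1
  refine ((hasDerivAt_id V).div hden (by positivity)).congr_deriv ?_
  simp only [id]
  field_simp
  ring

theorem HasSecondDerivAt.saturate {φ : ℝ → ℝ} {b c x : ℝ} (hδ : 0 < δ) (hφ0 : ∀ y, 0 ≤ φ y)
    (hφ : HasSecondDerivAt φ c x) (hb : HasDerivAt φ b x) :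
    HasSecondDerivAt (fun y => saturate δ (φ y))
      (c / (1 + δ * φ x) ^ 2 - 2 * δ * b ^ 2 / (1 + δ * φ x) ^ 3) x := by
  obtain ⟨φ', hφ', hc⟩ := hφ
  obtain rfl : φ' x = b := (hφ' x).unique hb
  have hpos : 0 < 1 + δ * φ x := by
    have := hφ0 x
    positivity
  have hsq : HasDerivAt (fun y => (1 + δ * φ y) ^ 2) (2 * (1 + δ * φ x) * (δ * φ' x)) x :=
    ((((hφ' x).const_mul δ).const_add 1).pow 2).congr_deriv (by ring)
  refine ⟨fun y => 1 / (1 + δ * φ y) ^ 2 * φ' y, fun y =>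
    (hasDerivAt_saturate hδ (hφ0 y)).comp y (hφ' y), ?_⟩
  refine (((hasDerivAt_const x (1 : ℝ)).div hsq (by positivity)).mul hc).congr_deriv ?_
  simp only [Pi.div_apply]
  field_simp
  ring

-- Concavity of `saturate δ` contributes the nonnegative term `2δ(∂ₓv)² / (1 + δv)³`.
theorem exists_ge_heatOp_saturate {v : ℝ → ℝ → ℝ} {q s x : ℝ} (hδ : 0 < δ) (hv : ∀ y, 0 ≤ v s y)
    (hq : HasHeatOpAt v q s x) : ∃ q' ≥ q / (1 + δ * v s x) ^ 2,
      HasHeatOpAt (fun τ y => saturate δ (v τ y)) q' s x := by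
  obtain ⟨D, c, hD, hc, rfl⟩ := hq
  obtain ⟨φ', hφ', -⟩ := id hc
  refine ⟨_, ?_, _, _, HasDerivAt.comp s (h₂ := saturate δ) (hasDerivAt_saturate hδ (hv x)) hD,
    hc.saturate hδ hv (hφ' x), rfl⟩
  have hpos : 0 < 1 + δ * v s x := by
    have := hv x
    positivity
  rw [ge_iff_le, ← sub_nonneg]
  calc 0 ≤ 2 * δ * φ' x ^ 2 / (1 + δ * v s x) ^ 3 := by positivity
    _ = _ := by ring

theorem saturate_sq_sub_le {V a : ℝ} (hδ : 0 < δ) (hV : 0 ≤ V) (ha : 0 ≤ a) :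
    saturate δ V ^ 2 - 2 * a * saturate δ V ≤ (V ^ 2 - 2 * a * V) / (1 + δ * V) ^ 2 := by
  have hdiff : (V ^ 2 - 2 * a * V) / (1 + δ * V) ^ 2 - (saturate δ V ^ 2 - 2 * a * saturate δ V) =
      2 * a * δ * V ^ 2 / (1 + δ * V) ^ 2 := by
    unfold saturate
    field_simp
    ring
  rw [← sub_nonneg, hdiff]
  positivity

end Saturate

theorem continuousOn_integral_mul_of_dominated {z k : ℝ → ℝ → ℝ} {g : ℝ → ℝ} {N : ℝ} {S : Set ℝ}
    (hz : ∀ s ∈ S, Continuous (z s)) (hzN : ∀ s ∈ S, ∀ x, |z s x| ≤ N)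
    (hzt : ∀ x, ContinuousOn (fun s => z s x) S) (hk : ∀ s ∈ S, Continuous (k s))
    (hkg : ∀ s ∈ S, ∀ x, |k s x| ≤ g x) (hkt : ∀ x, ContinuousOn (fun s => k s x) S)
    (hg : Integrable g) : ContinuousOn (fun s => ∫ x, z s x * k s x) S := by
  refine continuousOn_of_dominated (bound := fun x => N * g x)
    (fun s hs => ((hz s hs).mul (hk s hs)).aestronglyMeasurable)
    (fun s hs => .of_forall fun x => ?_) (hg.const_mul _)
    (.of_forall fun x => (hzt x).mul (hkt x))
  rw [Real.norm_eq_abs, abs_mul]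
  exact mul_le_mul (hzN s hs x) (hkg s hs x) (abs_nonneg _) ((abs_nonneg _).trans (hzN s hs x))

theorem sq_integral_mul_div_le {z ρ : ℝ → ℝ} (hρ0 : ∀ x, 0 ≤ ρ x) (hρ : Integrable ρ)
    (hz : Integrable fun x => z x * ρ x) (hz2 : Integrable fun x => z x ^ 2 * ρ x)
    (hpos : 0 < ∫ x, ρ x) : (∫ x, z x * ρ x) ^ 2 / (∫ x, ρ x) ≤ ∫ x, z x ^ 2 * ρ x := by
  set P := ∫ x, ρ x
  set J := ∫ x, z x * ρ x
  have hnonneg : 0 ≤ ∫ x, (z x - J / P) ^ 2 * ρ x :=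
    integral_nonneg fun x => mul_nonneg (sq_nonneg _) (hρ0 x)
  have hexpand : ∫ x, (z x - J / P) ^ 2 * ρ x =
      (∫ x, z x ^ 2 * ρ x) - 2 * (J / P) * J + (J / P) ^ 2 * P := by
    rw [← integral_const_mul, ← integral_const_mul, ← integral_sub hz2 (hz.const_mul _),
      ← integral_add (f := fun x => z x ^ 2 * ρ x - 2 * (J / P) * (z x * ρ x))
        (hz2.sub (hz.const_mul _)) (hρ.const_mul _)]
    congr with x
    ring
  have hmean : 2 * (J / P) * J - (J / P) ^ 2 * P = J ^ 2 / P := by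
    field_simp
    ring
  linarith

/-- `w ≥ 0` is a nonzero classical solution of `∂ₜw = ∂ₓ²w - 2 f w` on `(0, t] × ℝ`, with
integrable `∂ₓw`, which is dominated together with `∂ₜw` by the integrable function `g`. -/
structure IsDominatedSolution (f : ℝ → ℝ) (t : ℝ) (w : ℝ → ℝ → ℝ) (g : ℝ → ℝ) : Prop where
  contDiff : ∀ s ∈ Ioc 0 t, ContDiff ℝ 2 (w s)
  hasDerivAt_time : ∀ s ∈ Ioc 0 t, ∀ x,
    HasDerivAt (fun τ => w τ x) (deriv (deriv (w s)) x - 2 * f x * w s x) s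
  nonneg : ∀ s ∈ Ioc 0 t, ∀ x, 0 ≤ w s x
  integral_abs_pos : ∀ s ∈ Ioc 0 t, 0 < ∫ x, |w s x|
  integrable_deriv : ∀ s ∈ Ioc 0 t, Integrable (deriv (w s))
  integrable_bound : Integrable g
  abs_apply_le : ∀ s ∈ Ioc 0 t, ∀ x, |w s x| ≤ g x
  abs_deriv_time_le : ∀ s ∈ Ioc 0 t, ∀ x, |deriv (fun τ => w τ x) s| ≤ g x

namespace IsDominatedSolution

variable {f g : ℝ → ℝ} {w z : ℝ → ℝ → ℝ} {t s M N C : ℝ}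

theorem integrable (hw : IsDominatedSolution f t w g) (hs : s ∈ Ioc 0 t) : Integrable (w s) :=
  hw.integrable_bound.mono' (hw.contDiff s hs).continuous.aestronglyMeasurable
    (.of_forall (hw.abs_apply_le s hs))

theorem integral_abs_eq (hw : IsDominatedSolution f t w g) (hs : s ∈ Ioc 0 t) :
    ∫ x, |w s x| = ∫ x, w s x :=
  integral_congr_ae (.of_forall fun x => abs_of_nonneg (hw.nonneg s hs x))

theorem integral_pos (hw : IsDominatedSolution f t w g) (hs : s ∈ Ioc 0 t) : 0 < ∫ x, w s x :=
  hw.integral_abs_eq hs ▸ hw.integral_abs_pos s hs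

theorem integrable_potential_mul (hw : IsDominatedSolution f t w g) (hf : Continuous f)
    (hfM : ∀ x, |f x| ≤ M) (hs : s ∈ Ioc 0 t) : Integrable fun x => 2 * f x * w s x := by
  simpa only [mul_assoc] using
    ((hw.integrable hs).bdd_mul hf.aestronglyMeasurable (.of_forall hfM)).const_mul 2

theorem integrable_deriv_deriv (hw : IsDominatedSolution f t w g) (hf : Continuous f)
    (hfM : ∀ x, |f x| ≤ M) (hs : s ∈ Ioc 0 t) : Integrable (deriv (deriv (w s))) := by
  have hpot := hw.integrable_potential_mul hf hfM hs
  refine (hw.integrable_bound.add hpot.abs).mono'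
    ((hw.contDiff s hs).iterate_deriv' 0 2).continuous.aestronglyMeasurable
    (.of_forall fun x => ?_)
  have htime := hw.abs_deriv_time_le s hs x
  rw [(hw.hasDerivAt_time s hs x).deriv] at htime
  calc ‖deriv (deriv (w s)) x‖
      = |deriv (deriv (w s)) x - 2 * f x * w s x + 2 * f x * w s x| := by
        rw [sub_add_cancel, Real.norm_eq_abs]
    _ ≤ g x + |2 * f x * w s x| := (abs_add_le _ _).trans (add_le_add_left htime _)

theorem abs_sub_le (hw : IsDominatedSolution f t w g) {s₁ s₂ : ℝ} (hs₁ : 0 < s₁) (hs : s₁ ≤ s₂)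
    (hs₂ : s₂ ≤ t) (x : ℝ) : |w s₁ x - w s₂ x| ≤ g x * (s₂ - s₁) := by
  have hmem (σ : ℝ) (hσ : σ ∈ Icc s₁ s₂) : σ ∈ Ioc 0 t := ⟨hs₁.trans_le hσ.1, hσ.2.trans hs₂⟩
  have hmvt := (convex_Icc s₁ s₂).norm_image_sub_le_of_norm_deriv_le (f := fun σ => w σ x)
    (fun σ hσ => (hw.hasDerivAt_time σ (hmem σ hσ) x).differentiableAt)
    (fun σ hσ => hw.abs_deriv_time_le σ (hmem σ hσ) x) (right_mem_Icc.2 hs) (left_mem_Icc.2 hs)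
  simpa only [Real.norm_eq_abs, abs_sub_comm s₁, abs_of_nonneg (sub_nonneg.2 hs)] using hmvt

theorem isAdjointWeightAt (hw : IsDominatedSolution f t w g) (hf : Continuous f)
    (hfM : ∀ x, |f x| ≤ M) (hs : s ∈ Ioo 0 t) :
    IsAdjointWeightAt (fun τ => w (t - τ)) (fun x => 2 * f x * w (t - s) x) g s := by
  have hmem : ∀ τ ∈ Ico 0 t, t - τ ∈ Ioc 0 t := fun τ hτ =>
    ⟨sub_pos.2 hτ.2, sub_le_self t hτ.1⟩
  have hst := hmem s (Ioo_subset_Ico_self hs)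
  refine ⟨hw.contDiff _ hst, hw.nonneg _ hst, fun x => ?_, ?_, hw.integrable_deriv _ hst,
    hw.integrable_deriv_deriv hf hfM hst, hw.integrable_potential_mul hf hfM hst,
    hw.integrable_bound, ?_⟩
  · exact (HasDerivAt.comp s (h₂ := fun τ => w τ x) (hw.hasDerivAt_time _ hst x)
      ((hasDerivAt_id s).const_sub t)).congr_deriv (by ring)
  · filter_upwards [Ico_mem_nhdsGE hs.2] with τ hτ
    exact hw.integrable (hmem τ ⟨hs.1.le.trans hτ.1, hτ.2⟩)
  · filter_upwards [Ioo_mem_nhdsGT hs.2] with τ hτ x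
    simpa using hw.abs_sub_le (sub_pos.2 hτ.2) (sub_le_sub_left hτ.1.le t) hst.2 x

theorem continuousOn_comp_sub (hw : IsDominatedSolution f t w g) (x : ℝ) :
    ContinuousOn (fun s => w (t - s) x) (Ico 0 t) := fun s hs =>
  (ContinuousAt.comp (f := fun s => t - s) (g := fun τ => w τ x)
    (hw.hasDerivAt_time _ ⟨sub_pos.2 hs.2, sub_le_self t hs.1⟩ x).continuousAt
    (by fun_prop)).continuousWithinAt

theorem continuousOn_integral_mul (hw : IsDominatedSolution f t w g)
    (hz : ∀ s ∈ Ico 0 t, Continuous (z s)) (hzN : ∀ s ∈ Ico 0 t, ∀ x, |z s x| ≤ N)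
    (hzt : ∀ x, ContinuousOn (fun s => z s x) (Ico 0 t)) :
    ContinuousOn (fun s => ∫ x, z s x * w (t - s) x) (Ico 0 t) :=
  have hmem : ∀ s ∈ Ico 0 t, t - s ∈ Ioc 0 t := fun _ hs => ⟨sub_pos.2 hs.2, sub_le_self t hs.1⟩
  continuousOn_integral_mul_of_dominated hz hzN hzt
    (fun s hs => (hw.contDiff _ (hmem s hs)).continuous)
    (fun s hs => hw.abs_apply_le _ (hmem s hs)) hw.continuousOn_comp_sub hw.integrable_bound

theorem eventually_lt_slope_integral_mul (hw : IsDominatedSolution f t w g) (hf : Continuous f)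
    (hfM : ∀ x, |f x| ≤ M) (hz : IsMildSupersolution z t N C) (hs : s ∈ Ioo 0 t)
    (hq : ∀ x, ∃ q ≥ z s x ^ 2 - 2 * f x * z s x, HasHeatOpAt z q s x) {r : ℝ}
    (hr : r < (∫ x, z s x * w (t - s) x) ^ 2 / ∫ x, w (t - s) x) :
    ∀ᶠ τ in 𝓝[>] s, r < slope (fun s => ∫ x, z s x * w (t - s) x) s τ := by
  have hst : t - s ∈ Ioc 0 t := ⟨sub_pos.2 hs.2, sub_le_self t hs.1.le⟩
  have hzc := hz.continuous_space s hs
  have hzN := hz.abs_apply_le s hs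
  have hzw := hz.integrable_mul hs (hw.integrable hst)
  have hzzw : Integrable fun x => z s x ^ 2 * w (t - s) x := by
    simpa only [pow_two, mul_assoc] using hz.integrable_mul hs hzw
  have hF : Continuous fun x => z s x ^ 2 - 2 * f x * z s x := by fun_prop
  have hFB (x : ℝ) : |z s x ^ 2 - 2 * f x * z s x| ≤ N ^ 2 + 2 * M * N :=
    calc |z s x ^ 2 - 2 * f x * z s x| ≤ |z s x ^ 2| + |2 * f x * z s x| := abs_sub _ _
      _ = |z s x| ^ 2 + 2 * |f x| * |z s x| := by simp only [abs_mul, abs_pow, abs_two]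
      _ ≤ N ^ 2 + 2 * M * N := by
        have hM : 0 ≤ M := (abs_nonneg _).trans (hfM x)
        gcongr
        exacts [hzN x, hfM x, hzN x]
  refine hz.eventually_lt_slope_integral hs hF hFB hq (hw.isAdjointWeightAt hf hfM hs) ?_
  calc r < (∫ x, z s x * w (t - s) x) ^ 2 / ∫ x, w (t - s) x := hr
    _ ≤ ∫ x, z s x ^ 2 * w (t - s) x :=
      sq_integral_mul_div_le (hw.nonneg _ hst) (hw.integrable hst) hzw hzzw (hw.integral_pos hst)
    _ = _ := by
      congr with x
      ring

theorem integral_inv_integral_le (hw : IsDominatedSolution f t w g) (ht : 0 < t)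
    (hf : Continuous f) (hfM : ∀ x, |f x| ≤ M) (hz : IsMildSupersolution z t N C)
    (hq : ∀ s ∈ Ioo 0 t, ∀ x, ∃ q ≥ z s x ^ 2 - 2 * f x * z s x, HasHeatOpAt z q s x)
    (hzt : ∀ x, ContinuousOn (fun s => z s x) (Ico 0 t)) {κ : ℝ} (hκ : κ ∈ Ioc 0 N)
    (hz0 : ∀ x, z 0 x = κ) :
    ∫ s in (0 : ℝ)..t, (∫ x, w (t - s) x)⁻¹ ≤ (κ * ∫ x, w t x)⁻¹ := by
  have hpos : ∀ s ∈ Ico 0 t, 0 < ∫ x, w (t - s) x := fun s hs =>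
    hw.integral_pos ⟨sub_pos.2 hs.2, sub_le_self t hs.1⟩
  have hwt : 0 < ∫ x, w t x := hw.integral_pos ⟨ht, le_rfl⟩
  have hzc : ∀ s ∈ Ico 0 t, Continuous (z s) := fun s hs => by
    rcases hs.1.eq_or_lt with rfl | hs0
    · simpa only [funext hz0] using continuous_const
    · exact hz.continuous_space s ⟨hs0, hs.2⟩
  have hzN : ∀ s ∈ Ico 0 t, ∀ x, |z s x| ≤ N := fun s hs x => by
    rcases hs.1.eq_or_lt with rfl | hs0
    · rw [hz0, abs_of_pos hκ.1]
      exact hκ.2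
    · exact hz.abs_apply_le s ⟨hs0, hs.2⟩ x
  have hJ := hw.continuousOn_integral_mul hzc hzN hzt
  have hP : ContinuousOn (fun s => ∫ x, w (t - s) x) (Ico 0 t) := by
    simpa only [one_mul] using hw.continuousOn_integral_mul (z := fun _ _ => 1) (N := 1)
      (fun _ _ => continuous_const) (fun _ _ _ => abs_one.le) fun _ => continuousOn_const
  have hJ0 : ∫ x, z 0 x * w (t - 0) x = κ * ∫ x, w t x := by
    simp only [hz0, sub_zero, integral_const_mul]
  refine intervalIntegral_le_of_forall_lt ht (inv_nonneg.2 (mul_pos hκ.1 hwt).le) fun b hb => ?_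
  have hsub : Icc 0 b ⊆ Ico 0 t := Icc_subset_Ico_right hb.2
  rw [← hJ0]
  refine integral_inv_le_inv_of_riccati hb.1 (fun s hs => hpos s (hsub hs)) (hP.mono hsub)
    (hJ.mono hsub) (hJ0 ▸ mul_pos hκ.1 hwt) fun s hs r hr => ?_
  have hst : s ∈ Ioo 0 t := ⟨hs.1, hs.2.trans hb.2⟩
  exact hw.eventually_lt_slope_integral_mul hf hfM hz hst (hq s hst) hr

end IsDominatedSolution

theorem exists_ge_heatOp_saturate_neg {f : ℝ → ℝ} {u : ℝ → ℝ → ℝ} {δ s x : ℝ} (hδ : 0 < δ)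
    (hfx : 0 ≤ f x) (hu : ∀ y, u s y ≤ 0)
    (hux : HasHeatOpAt u (-2 * f x * u s x - u s x ^ 2) s x) :
    ∃ q ≥ saturate δ (-u s x) ^ 2 - 2 * f x * saturate δ (-u s x),
      HasHeatOpAt (fun τ y => saturate δ (-u τ y)) q s x := by
  have hv (y : ℝ) : 0 ≤ -u s y := neg_nonneg.2 (hu y)
  obtain ⟨q, hq, hqz⟩ := exists_ge_heatOp_saturate hδ hv hux.neg
  refine ⟨q, ((saturate_sq_sub_le hδ (hv x) hfx).trans_eq ?_).trans hq, hqz⟩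
  ring

theorem isMildSupersolution_saturate_neg {f : ℝ → ℝ} {u : ℝ → ℝ → ℝ} {M δ T : ℝ} (hδ : 0 < δ)
    (hf0 : ∀ x, 0 ≤ f x) (hfM : ∀ x, f x ≤ M) (hu : ∀ s ∈ Ioo 0 T, ∀ x, u s x ≤ 0)
    (hu_eq : ∀ s ∈ Ioo 0 T, ∀ x, HasHeatOpAt u (-2 * f x * u s x - u s x ^ 2) s x) :
    IsMildSupersolution (fun s x => saturate δ (-u s x)) T δ⁻¹ (2 * M * δ⁻¹ + 1) := by
  have hM : 0 ≤ M := (hf0 0).trans (hfM 0)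
  have hz0 (s : ℝ) (hs : s ∈ Ioo 0 T) (x : ℝ) : 0 ≤ saturate δ (-u s x) :=
    saturate_nonneg hδ (neg_nonneg.2 (hu s hs x))
  have hzN (s : ℝ) (hs : s ∈ Ioo 0 T) (x : ℝ) : saturate δ (-u s x) ≤ δ⁻¹ :=
    saturate_le_inv hδ (neg_nonneg.2 (hu s hs x))
  refine isMildSupersolution_of_heatOp_gt (by positivity) hz0 hzN fun s hs x => ?_
  obtain ⟨q, hq, hqz⟩ := exists_ge_heatOp_saturate_neg hδ (hf0 x) (hu s hs) (hu_eq s hs x)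
  refine ⟨q, ?_, hqz⟩
  have hpot : f x * saturate δ (-u s x) ≤ M * δ⁻¹ :=
    mul_le_mul (hfM x) (hzN s hs x) (hz0 s hs x) hM
  linarith [sq_nonneg (saturate δ (-u s x))]

theorem IsDominatedSolution.mul_integral_div_integral_le_one {f : ℝ → ℝ} {M : ℝ} (hf : Continuous f)
    (hf0 : ∀ x, 0 ≤ f x) (hfM : ∀ x, f x ≤ M) {ε t : ℝ} (hε : 0 < ε) (ht : 0 < t)
    {u : ℝ → ℝ → ℝ} (hu0 : ∀ x, u 0 x = -ε)
    (hu_cont : ∀ x, ContinuousOn (fun s => u s x) (Ico 0 t))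
    (hu_nonpos : ∀ s ∈ Ioo 0 t, ∀ x, u s x ≤ 0)
    (hu_eq : ∀ s ∈ Ioo 0 t, ∀ x, HasHeatOpAt u (-2 * f x * u s x - u s x ^ 2) s x)
    {w : ℝ → ℝ → ℝ} {g : ℝ → ℝ} (hw : IsDominatedSolution f t w g) :
    ε * ∫ s in (0 : ℝ)..t, (∫ x, |w t x|) / (∫ x, |w s x|) ≤ 1 := by
  have htrunc (δ : ℝ) (hδ : 0 < δ) : ∫ s in (0 : ℝ)..t, (∫ x, w (t - s) x)⁻¹ ≤
      (saturate δ ε * ∫ x, w t x)⁻¹ := by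
    have hv (s : ℝ) (hs : s ∈ Ico 0 t) (x : ℝ) : 0 ≤ -u s x := by
      rcases hs.1.eq_or_lt with rfl | hs0
      · simpa only [hu0, neg_neg] using hε.le
      · exact neg_nonneg.2 (hu_nonpos s ⟨hs0, hs.2⟩ x)
    refine hw.integral_inv_integral_le ht hf (fun x => (abs_of_nonneg (hf0 x)).trans_le (hfM x))
      (isMildSupersolution_saturate_neg hδ hf0 hfM hu_nonpos hu_eq)
      (fun s hs x => exists_ge_heatOp_saturate_neg hδ (hf0 x) (hu_nonpos s hs) (hu_eq s hs x))
      (fun x s hs => ?_) ⟨saturate_pos hδ hε, saturate_le_inv hδ hε.le⟩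
      fun x => by rw [hu0, neg_neg]
    exact ContinuousAt.comp_continuousWithinAt (f := fun s => -u s x)
      (hasDerivAt_saturate hδ (hv s hs x)).continuousAt (hu_cont x s hs).neg
  have hwt : 0 < ∫ x, w t x := hw.integral_pos ⟨ht, le_rfl⟩
  have hreflect : ∫ s in (0 : ℝ)..t, (∫ x, |w t x|) / (∫ x, |w s x|) =
      (∫ x, w t x) * ∫ s in (0 : ℝ)..t, (∫ x, w (t - s) x)⁻¹ := by
    rw [intervalIntegral.integral_comp_sub_left (fun s => (∫ x, w s x)⁻¹), sub_self, sub_zero,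
      ← intervalIntegral.integral_const_mul]
    refine intervalIntegral.integral_congr_uIoo fun s hs => ?_
    rw [uIoo_of_le ht.le] at hs
    rw [hw.integral_abs_eq ⟨ht, le_rfl⟩, hw.integral_abs_eq ⟨hs.1, hs.2.le⟩, div_eq_mul_inv]
  refine le_of_forall_pos_le_add fun η hη => ?_
  calc ε * ∫ s in (0 : ℝ)..t, (∫ x, |w t x|) / (∫ x, |w s x|)
      ≤ ε * ((∫ x, w t x) * (saturate (η / ε) ε * ∫ x, w t x)⁻¹) := by
        rw [hreflect]
        gcongr
        exact htrunc _ (by positivity)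
    _ = 1 + η := by
        unfold saturate
        field_simp

theorem fence_inequality_constant_datum_general {f : ℝ → ℝ} {M : ℝ} (hf : Continuous f)
    (hf0 : ∀ x, 0 ≤ f x) (hfM : ∀ x, f x ≤ M) {ε T : ℝ} (hε : 0 < ε) {u : ℝ → ℝ → ℝ}
    (hu0 : ∀ x, u 0 x = -ε) (hu_cont : ∀ x, ContinuousOn (fun s => u s x) (Ico 0 T))
    (hu_nonpos : ∀ s ∈ Ioo 0 T, ∀ x, u s x ≤ 0)
    (hu_eq : ∀ s ∈ Ioo 0 T, ∀ x, HasHeatOpAt u (-2 * f x * u s x - u s x ^ 2) s x)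
    {w : ℝ → ℝ → ℝ} (hw : ∀ t ∈ Ioo 0 T, ∃ g, IsDominatedSolution f t w g) :
    (∀ t ∈ Ioo 0 T, ε * ∫ s in (0 : ℝ)..t, (∫ x, |w t x|) / (∫ x, |w s x|) ≤ 1) ∧
    (∀ T', 0 < T' → 1 < ε * ∫ s in (0 : ℝ)..T', (∫ x, |w T' x|) / (∫ x, |w s x|) → T ≤ T') := by
  have hle : ∀ t ∈ Ioo 0 T, ε * ∫ s in (0 : ℝ)..t, (∫ x, |w t x|) / (∫ x, |w s x|) ≤ 1 := by
    intro t ht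
    obtain ⟨g, hg⟩ := hw t ht
    have hsub : Ioo 0 t ⊆ Ioo 0 T := Ioo_subset_Ioo_right ht.2.le
    exact hg.mul_integral_div_integral_le_one hf hf0 hfM hε ht.1 hu0
      (fun x => (hu_cont x).mono (Ico_subset_Ico_right ht.2.le))
      (fun s hs => hu_nonpos s (hsub hs)) fun s hs => hu_eq s (hsub hs)
  exact ⟨hle, fun T' hT' hlt => le_of_not_gt fun hT => (hle T' ⟨hT', hT⟩).not_gt hlt⟩

end

/-- Remark (stability criterion): for a nonpositive bounded classical solution `u` of
`∂u/∂t = ∂²u/∂x² − 2 f u − u²` with constant initial datum `u(0,·) = −ε`, and a solution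
`w` of the linearized equation with nonnegative nonzero integrable initial datum and the
regularity/decay from parabolic theory, for every `t ∈ (0,T)`:
`ε ∫₀ᵗ ‖w(t,·)‖_{L¹}/‖w(s,·)‖_{L¹} ds ≤ 1`.  Consequently, if
`ε ∫₀^{T'} ‖w(T',·)‖_{L¹}/‖w(s,·)‖_{L¹} ds > 1` for some `T' > 0`, then no such
classical solution can exist on `[0,T)` with `T > T'`. -/
theorem fence_inequality_constant_datum
    (f : ℝ → ℝ) (hf_smooth : ContDiff ℝ (⊤ : ℕ∞) f) (hf_pos : ∀ x, 0 < f x)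
    (hf_decay : Tendsto f (cocompact ℝ) (nhds 0))
    (hf_d1 : ∃ M : ℝ, ∀ x, |deriv f x| ≤ M)
    (hf_d2 : ∃ M : ℝ, ∀ x, |deriv (deriv f) x| ≤ M)
    (ε : ℝ) (hε : 0 < ε)
    (T : ℝ) (hT : 0 < T)
    (u : ℝ → ℝ → ℝ)
    (hu0 : ∀ x, u 0 x = -ε)
    (hu_eq : ∀ s ∈ Set.Ico (0 : ℝ) T, ∀ x : ℝ,
      HasDerivAt (fun τ => u τ x)
        (deriv (deriv (u s)) x - 2 * f x * u s x - (u s x) ^ 2) s)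
    (hu_reg : ∀ s ∈ Set.Ico (0 : ℝ) T, ContDiff ℝ 2 (u s))
    (hu_cont : ∀ x, ContinuousOn (fun s => u s x) (Set.Ico (0 : ℝ) T))
    (hu_nonpos : ∀ s ∈ Set.Ico (0 : ℝ) T, ∀ x, u s x ≤ 0)
    (hu_bdd : ∀ s ∈ Set.Ico (0 : ℝ) T, ∃ M : ℝ, ∀ x, |u s x| ≤ M)
    (w : ℝ → ℝ → ℝ) (w₀ : ℝ → ℝ)
    (hw0 : ∀ x, w 0 x = w₀ x)
    (hw0_nonneg : ∀ x, 0 ≤ w₀ x) (hw0_int : Integrable w₀)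
    (hw_eq : ∀ s : ℝ, 0 < s → ∀ x : ℝ,
      HasDerivAt (fun τ => w τ x)
        (deriv (deriv (w s)) x - 2 * f x * w s x) s)
    (hw_reg : ∀ s : ℝ, 0 ≤ s → ContDiff ℝ 2 (w s))
    (hw_nonneg : ∀ s : ℝ, 0 ≤ s → ∀ x, 0 ≤ w s x)
    (hw_int : ∀ s : ℝ, 0 ≤ s → Integrable (w s) ∧ Integrable (deriv (w s)))
    (hw_decay : ∀ s : ℝ, 0 ≤ s →
      Tendsto (w s) (cocompact ℝ) (nhds 0) ∧
        Tendsto (deriv (w s)) (cocompact ℝ) (nhds 0))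
    (hw_pos : ∀ s : ℝ, 0 ≤ s → 0 < ∫ x, |w s x|)
    (hw_unif : ∀ t₀ : ℝ, 0 ≤ t₀ → ∃ g : ℝ → ℝ, Integrable g ∧
      ∀ s ∈ Set.Icc (0 : ℝ) t₀, ∀ x,
        |w s x| ≤ g x ∧ |deriv (fun τ => w τ x) s| ≤ g x) :
    (∀ t ∈ Set.Ioo (0 : ℝ) T,
      ε * ∫ s in (0 : ℝ)..t, (∫ x, |w t x|) / (∫ x, |w s x|) ≤ 1) ∧
    (∀ T' : ℝ, 0 < T' →
      1 < ε * ∫ s in (0 : ℝ)..T', (∫ x, |w T' x|) / (∫ x, |w s x|) → T ≤ T') :=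
  let f₀ : ZeroAtInftyContinuousMap ℝ ℝ := ⟨⟨f, hf_smooth.continuous⟩, hf_decay⟩
  fence_inequality_constant_datum_general hf_smooth.continuous (fun x => (hf_pos x).le)
    (fun x => (le_abs_self _).trans (f₀.toBCF.norm_coe_le_norm x)) hε hu0 hu_cont
    (fun s hs => hu_nonpos s (Set.Ioo_subset_Ico_self hs))
    (fun s hs x => ⟨_, _, hu_eq s (Set.Ioo_subset_Ico_self hs) x,
      hasSecondDerivAt_of_contDiff (hu_reg s (Set.Ioo_subset_Ico_self hs)) x, by ring⟩)
    fun t ht => (hw_unif t ht.1.le).imp fun g ⟨hg, hwg⟩ =>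
      ⟨fun s hs => hw_reg s hs.1.le, fun s hs => hw_eq s hs.1, fun s hs => hw_nonneg s hs.1.le,
        fun s hs => hw_pos s hs.1.le, fun s hs => (hw_int s hs.1.le).2, hg,
        fun s hs x => (hwg s (Set.Ioc_subset_Icc_self hs) x).1,
        fun s hs x => (hwg s (Set.Ioc_subset_Icc_self hs) x).2⟩
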